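/- Let G be a finite subgroup of SL(3,ℂ) acting irreducibly on ℂ³. Then G has a nonzero semi-invariant homogeneous polynomial of degree at most 2 if and only if Ḡ, the image of G in PGL(3,ℂ), is isomorphic to the alternating group A₄, to the symmetric group S₄, or to the alternating group A₅. -/

import Mathlib

open Matrix

/-!
A semi-invariant of degree at most two amounts to a nonzero symmetric bilinear form that `G` scales
by a character, since the kernel of a nonzero semi-invariant linear form would be an invariant
plane.

Given such a form, it is nondegenerate by irreducibility and its character has order dividing three,
so multiplying each element of `G` by the value of the character turns `G` into an irreducible group
of rotations isomorphic to its image in `PGL`. As in the classical count over `ℝ`, every nontrivial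
rotation has one axis, and Burnside's count of the poles leaves the orders 12, 24 and 60; the
actions on the Sylow subgroups then identify the groups `A₄`, `S₄` and `A₅`.

Conversely, each of these groups is generated by an involution `x` and an element `y` of order three
such that `x * y` is conjugate to its inverse or to `y`. They lift to elements `a` and `b` of `SL₃`
which, in the basis of translates under `b` of a vector on the axis of `a`, are a half-turn and a
cyclic permutation of the basis vectors, determined by `s = tr (a b)` and `t = tr (b⁻¹ a)`.
Conjugacy in `PGL` gives `s = z t` with `z ^ 3 = 1`, which is exactly what is needed for `a` and `b`
to preserve a symmetric form up to scalars.
-/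

section OrbitEquation

/-- Since `∑ 1 / n i = 1 + 2 / N`, the smallest `n i` is `2`, the next one at most `3`, and the
last one at most `5`. -/
lemma orbit_equation_of_monotone {N : ℕ} {n o : Fin 3 → ℕ} (hmul : ∀ i, n i * o i = N)
    (hn : ∀ i, 2 ≤ n i) (ho : ∀ i, 3 ≤ o i) (hsum : ∑ i, o i = N + 2) (hmono : Monotone n) :
    N = 12 ∨ N = 24 ∨ N = 60 ∧ n = ![2, 3, 5] := by
  have le_N {k : ℕ} (i : Fin 3) (hk : k ≤ n i) : k * o i ≤ N :=
    hmul i ▸ Nat.mul_le_mul_right _ hk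
  have h01 : n 0 ≤ n 1 := hmono (by decide)
  have h12 : n 1 ≤ n 2 := hmono (by decide)
  have hn0 : n 0 = 2 := by
    by_contra hne
    have hn0 : 3 ≤ n 0 := by have := hn 0; omega
    have := le_N 0 hn0
    have := le_N 1 (hn0.trans h01)
    have := le_N 2 (hn0.trans (h01.trans h12))
    rw [Fin.sum_univ_three] at hsum
    omega
  have hmul0 := hmul 0
  have hmul1 := hmul 1
  have hmul2 := hmul 2
  have ho2 := ho 2
  rw [Fin.sum_univ_three] at hsum
  rw [hn0] at hmul0 h01
  have hn1 : n 1 < 4 := by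
    by_contra! hge
    have := le_N 1 hge
    have := le_N 2 (hge.trans h12)
    omega
  have hn2 : n 2 < 6 := by
    by_contra! hge
    have := le_N 2 hge
    have : n 1 = 2 ∨ n 1 = 3 := by omega
    rcases this with h | h <;> rw [h] at hmul1 <;> omega
  have hvec : n = ![2, n 1, n 2] := by ext i; fin_cases i <;> simp [hn0]
  rw [hvec]
  generalize n 1 = n₁ at *
  generalize n 2 = n₂ at *
  interval_cases n₁ <;> interval_cases n₂ <;> first | omega | simp; omega

lemma orbit_equation_fin_three {N : ℕ} {n o : Fin 3 → ℕ} (hmul : ∀ i, n i * o i = N)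
    (hn : ∀ i, 2 ≤ n i) (ho : ∀ i, 3 ≤ o i) (hsum : ∑ i, o i = N + 2) :
    N = 12 ∨ N = 24 ∨ N = 60 ∧ Function.Injective n ∧ ∀ i, n i ∈ ({2, 3, 5} : Finset ℕ) := by
  set σ := Tuple.sort n
  have hsol := orbit_equation_of_monotone (n := n ∘ σ) (o := o ∘ σ) (fun i ↦ hmul _)
    (fun i ↦ hn _) (fun i ↦ ho _) ((Equiv.sum_comp σ o).trans hsum) (Tuple.monotone_sort n)
  refine hsol.imp_right (Or.imp_right fun ⟨hN, hvec⟩ ↦ ⟨hN, ?_, fun i ↦ ?_⟩)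
  · rw [← σ.injective_comp, hvec]
    decide
  · obtain ⟨j, rfl⟩ := σ.surjective i
    have hj : n (σ j) = ![2, 3, 5] j := congrFun hvec j
    have hmem : ∀ j, ![2, 3, 5] j ∈ ({2, 3, 5} : Finset ℕ) := by decide
    exact hj ▸ hmem j

lemma orbit_equation {Ω : Type*} [Fintype Ω] {N : ℕ} {n o : Ω → ℕ} (hN : 2 ≤ N)
    (hmul : ∀ w, n w * o w = N) (hn : ∀ w, 2 ≤ n w) (ho : ∀ w, 3 ≤ o w)
    (hsum : ∑ w, o w + 2 * (N - 1) = Fintype.card Ω * N) :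
    N = 12 ∨ N = 24 ∨ N = 60 ∧ Function.Injective n ∧ ∀ w, n w ∈ ({2, 3, 5} : Finset ℕ) := by
  have two_mul_le (w : Ω) : 2 * o w ≤ N := hmul w ▸ Nat.mul_le_mul_right _ (hn w)
  have hcard : Fintype.card Ω < 4 := by
    by_contra! hge
    have h4 : 4 * N ≤ Fintype.card Ω * N := Nat.mul_le_mul_right _ hge
    have hle : 2 * ∑ w, o w ≤ Fintype.card Ω * N := by
      rw [Finset.mul_sum, ← smul_eq_mul (Fintype.card Ω)]
      exact Finset.sum_le_card_nsmul _ _ _ fun w _ ↦ two_mul_le w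
    omega
  obtain ⟨k, hk⟩ : ∃ k, Fintype.card Ω = k := ⟨_, rfl⟩
  let e : Fin k ≃ Ω := (Fintype.equivFinOfCardEq hk).symm
  rw [hk, ← e.sum_comp] at hsum
  rw [hk] at hcard
  interval_cases k
  · rw [Fin.sum_univ_zero] at hsum
    omega
  · rw [Fin.sum_univ_one] at hsum
    have := ho (e 0)
    have := two_mul_le (e 0)
    omega
  · rw [Fin.sum_univ_two] at hsum
    have := ho (e 0)
    have := ho (e 1)
    omega
  · refine (orbit_equation_fin_three (fun i ↦ hmul (e i)) (fun i ↦ hn (e i)) (fun i ↦ ho (e i))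
      (by omega)).imp_right (Or.imp_right fun ⟨h60, hinj, hmem⟩ ↦ ⟨h60, ?_, fun w ↦ ?_⟩)
    · exact (e.injective_comp n).mp hinj
    · simpa using hmem (e.symm w)

end OrbitEquation

section PoleActions

open MulAction

/-- The combinatorial properties of the action of a finite group of rotations, fixing no line, on
the set of its poles, i.e. the unit vectors on the axes of its nontrivial elements: each rotation
has two poles, each pole is the pole of some rotation, and no orbit of poles lies on a line. -/
structure IsPoleAction (H X : Type*) [Group H] [MulAction H X] : Prop where
  ncard_fixedBy : ∀ h : H, h ≠ 1 → (fixedBy X h).ncard = 2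
  stabilizer_ne_bot : ∀ x : X, stabilizer H x ≠ ⊥
  three_le_ncard_orbit : ∀ x : X, 3 ≤ (orbit H x).ncard

variable {H X : Type*} [Group H] [MulAction H X]

lemma card_stabilizer_mul_ncard_orbit (x : X) :
    Nat.card (stabilizer H x) * (orbit H x).ncard = Nat.card H := by
  rw [← index_stabilizer, Subgroup.card_mul_index]

variable (H X) in
lemma card_add_sum_ncard_fixedBy_eq [Finite X] [Fintype H] [DecidableEq H] :
    Nat.card X + ∑ h ∈ Finset.univ.erase (1 : H), (fixedBy X h).ncard =
      Nat.card (orbitRel.Quotient H X) * Nat.card H := by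
  classical
  have := Fintype.ofFinite X
  have := Fintype.ofFinite (orbitRel.Quotient H X)
  have hburnside := sum_card_fixedBy_eq_card_orbits_mul_card_group H X
  rw [← Finset.add_sum_erase _ _ (Finset.mem_univ (1 : H))] at hburnside
  simpa [← Nat.card_eq_fintype_card, Nat.card_coe_set_eq] using hburnside

namespace IsPoleAction

lemma sum_ncard_orbit_add [Finite H] [Finite X] (hX : IsPoleAction H X)
    [Fintype (orbitRel.Quotient H X)] :
    ∑ w : orbitRel.Quotient H X, (orbit H w.out).ncard + 2 * (Nat.card H - 1) =
      Fintype.card (orbitRel.Quotient H X) * Nat.card H := by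
  classical
  have := Fintype.ofFinite H
  have hcard : Nat.card X = ∑ w : orbitRel.Quotient H X, (orbit H w.out).ncard := by
    simp_rw [Nat.card_congr (selfEquivSigmaOrbits H X), Nat.card_sigma, Nat.card_coe_set_eq]
  have hfixed : ∑ h ∈ Finset.univ.erase (1 : H), (fixedBy X h).ncard = 2 * (Nat.card H - 1) := by
    rw [Finset.sum_congr rfl fun h hh ↦ hX.ncard_fixedBy h (Finset.ne_of_mem_erase hh)]
    simp [mul_comm]
  rw [← hcard, ← hfixed, card_add_sum_ncard_fixedBy_eq, Nat.card_eq_fintype_card]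

/-- The last clause says that there are three orbits, with stabilizers of orders `2`, `3`, `5`. -/
theorem card_eq [Finite H] [Finite X] [Nontrivial H] (hX : IsPoleAction H X) :
    Nat.card H = 12 ∨ Nat.card H = 24 ∨ Nat.card H = 60 ∧
      (∀ x : X, Nat.card (stabilizer H x) ∈ ({2, 3, 5} : Finset ℕ)) ∧
      ∀ x y : X, Nat.card (stabilizer H x) = Nat.card (stabilizer H y) → y ∈ orbit H x := by
  classical
  have := Fintype.ofFinite (orbitRel.Quotient H X)
  refine (orbit_equation (Ω := orbitRel.Quotient H X) Finite.one_lt_card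
    (fun w ↦ card_stabilizer_mul_ncard_orbit w.out)
    (fun w ↦ (Subgroup.one_lt_card_iff_ne_bot _).mpr (hX.stabilizer_ne_bot w.out))
    (fun w ↦ hX.three_le_ncard_orbit w.out) hX.sum_ncard_orbit_add).imp_right
    (Or.imp_right fun ⟨h60, hinj, hmem⟩ ↦ ⟨h60, ?_⟩)
  have card_out (x : X) : Nat.card (stabilizer H (Quotient.mk (orbitRel H X) x).out) =
      Nat.card (stabilizer H x) :=
    Nat.card_congr (stabilizerEquivStabilizerOfOrbitRel (Quotient.mk_out x)).toEquiv
  refine ⟨fun x ↦ card_out x ▸ hmem _, fun x y hxy ↦ ?_⟩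
  rw [← card_out x, ← card_out y] at hxy
  exact Quotient.exact (hinj hxy).symm

lemma exists_smul_eq_self (hX : IsPoleAction H X) {h : H} (h1 : h ≠ 1) : ∃ x : X, h • x = x :=
  Set.nonempty_of_ncard_ne_zero (s := fixedBy X h) (by simp [hX.ncard_fixedBy h h1])

lemma eq_bot_of_normal_of_isCyclic [Finite X] (hX : IsPoleAction H X) {K : Subgroup H}
    (hK : K.Normal) (hcyc : IsCyclic K) : K = ⊥ := by
  obtain ⟨h, rfl⟩ := (Subgroup.isCyclic_iff_exists_zpowers_eq_top K).mp hcyc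
  rw [Subgroup.zpowers_eq_bot]
  by_contra h1
  obtain ⟨x, hx⟩ := hX.exists_smul_eq_self h1
  have hsub : orbit H x ⊆ fixedBy X h := by
    rintro _ ⟨g, rfl⟩
    have hle : Subgroup.zpowers h ≤ stabilizer H x := Subgroup.zpowers_le.mpr hx
    have hconj : g⁻¹ * h * g ∈ stabilizer H x := by
      simpa using hle (hK.conj_mem h (Subgroup.mem_zpowers h) g⁻¹)
    simpa [mul_smul, inv_smul_eq_iff] using hconj
  have hle := Set.ncard_le_ncard hsub
  rw [hX.ncard_fixedBy h h1] at hle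
  exact absurd (hX.three_le_ncard_orbit x) (by omega)

end IsPoleAction

end PoleActions

section PermutationGroups

open Equiv

variable {H S : Type*} [Group H] [Finite S] {f : H →* Perm S} {n : ℕ}

lemma nonempty_mulEquiv_perm (hf : Function.Injective f) (hS : Nat.card S = n)
    (hH : Nat.card H = n.factorial) : Nonempty (H ≃* Perm (Fin n)) := by
  have hcard : Nat.card H = Nat.card (Perm S) := by rw [hH, Nat.card_perm, hS]
  have hbij : Function.Bijective f := (Nat.bijective_iff_injective_and_card f).mpr ⟨hf, hcard⟩
  exact ⟨(MulEquiv.ofBijective f hbij).trans (Finite.equivFinOfCardEq hS).permCongrHom⟩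

lemma nonempty_mulEquiv_alternatingGroup (hf : Function.Injective f) (hS : Nat.card S = n)
    (hH : 2 * Nat.card H = n.factorial) : Nonempty (H ≃* alternatingGroup (Fin n)) := by
  classical
  have := Fintype.ofFinite S
  have hrange : Nat.card f.range = Nat.card H :=
    (Nat.card_congr (MonoidHom.ofInjective hf).toEquiv).symm
  have hindex : f.range.index = 2 := by
    have hmul := f.range.index_mul_card
    rw [Nat.card_perm, hS, ← hH, hrange] at hmul
    have : Finite H := Finite.of_injective f hf
    exact Nat.eq_of_mul_eq_mul_right Nat.card_pos hmul
  have halt := Perm.eq_alternatingGroup_of_index_eq_two hindex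
  exact ⟨(MonoidHom.ofInjective hf).trans ((MulEquiv.subgroupCongr halt).trans
    (Finite.equivFinOfCardEq hS).altCongrHom)⟩

end PermutationGroups

section SylowConjugation

open MulAction

variable {H : Type*} [Group H] {p : ℕ}

lemma card_sylow_of_card_eq [Finite H] [hp : Fact p.Prime] {k m : ℕ}
    (hH : Nat.card H = p ^ k * m) (hm : ¬p ∣ m) (P : Sylow p H) :
    Nat.card P = p ^ k := by
  rw [P.card_eq_multiplicity, hH, Nat.factorization_mul_apply_of_coprime
    (Nat.Coprime.pow_left k ((hp.out.coprime_iff_not_dvd).mpr hm)),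
    hp.out.factorization_pow, Nat.factorization_eq_zero_of_not_dvd hm, Finsupp.single_eq_same,
    add_zero]

lemma card_sylow_mul_card_normalizer [Finite H] [Fact p.Prime] (P : Sylow p H) :
    Nat.card (Sylow p H) * Nat.card (Subgroup.normalizer (P : Set H)) = Nat.card H := by
  rw [P.card_eq_index_normalizer, Subgroup.index_mul_card]

lemma ker_toPermHom_sylow_le_normalizer (P : Sylow p H) :
    (toPermHom H (Sylow p H)).ker ≤ Subgroup.normalizer P := fun _ hk ↦
  Sylow.smul_eq_iff_mem_normalizer.mp (Equiv.congr_fun (MonoidHom.mem_ker.mp hk) P)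

lemma not_dvd_card_ker_toPermHom_sylow [Finite H] [hp : Fact p.Prime] {P P' : Sylow p H}
    (hdisj : Disjoint (P : Subgroup H) P') :
    ¬p ∣ Nat.card (toPermHom H (Sylow p H)).ker := by
  intro hdvd
  obtain ⟨c, hc⟩ := exists_prime_orderOf_dvd_card' p hdvd
  have hpgroup : IsPGroup p (Subgroup.zpowers (c : H)) :=
    IsPGroup.of_card (n := 1) (by rw [Nat.card_zpowers, Subgroup.orderOf_coe, hc, pow_one])
  have mem_sylow (Q : Sylow p H) : (c : H) ∈ (Q : Subgroup H) := by
    have hmem : (c : H) ∈ Subgroup.zpowers (c : H) ⊓ Subgroup.normalizer Q :=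
      ⟨Subgroup.mem_zpowers _, ker_toPermHom_sylow_le_normalizer Q c.2⟩
    rw [hpgroup.inf_normalizer_sylow Q] at hmem
    exact hmem.2
  have hc1 : c = 1 := Subtype.ext (Subgroup.disjoint_def.mp hdisj (mem_sylow P) (mem_sylow P'))
  rw [hc1, orderOf_one] at hc
  exact hp.out.one_lt.ne hc

lemma injective_toPermHom_sylow [Finite H] [Fact p.Prime]
    (hcyc : ∀ K : Subgroup H, K.Normal → IsCyclic K → K = ⊥) {P P' : Sylow p H}
    (hdisj : Disjoint (P : Subgroup H) P')
    (hN : ∀ k, k ∣ Nat.card (Subgroup.normalizer (P : Set H)) → ¬p ∣ k → k = 1 ∨ k.Prime) :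
    Function.Injective (toPermHom H (Sylow p H)) := by
  rw [← MonoidHom.ker_eq_bot_iff]
  rcases hN _ (Subgroup.card_dvd_of_le (ker_toPermHom_sylow_le_normalizer P))
    (not_dvd_card_ker_toPermHom_sylow hdisj) with h1 | hprime
  · exact Subgroup.card_eq_one.mp h1
  · have := Fact.mk hprime
    exact hcyc _ (MonoidHom.normal_ker _) (isCyclic_of_prime_card rfl)

lemma disjoint_of_card_prime {P Q : Subgroup H} [Finite P] [Finite Q] (hP : (Nat.card P).Prime)
    (hPQ : Nat.card P = Nat.card Q) (hne : P ≠ Q) : Disjoint P Q := by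
  rcases (Nat.dvd_prime hP).mp (Subgroup.card_dvd_of_le (inf_le_left : P ⊓ Q ≤ P)) with h | h
  · exact disjoint_iff.mpr (Subgroup.card_eq_one.mp h)
  · have hinf : P ⊓ Q = P := Subgroup.eq_of_le_of_card_ge inf_le_left h.ge
    exact absurd (Subgroup.eq_of_le_of_card_ge (inf_eq_left.mp hinf) hPQ.ge) hne

end SylowConjugation

section GroupsOfOrderTwelveAndTwentyFour

open MulAction

variable {H : Type*} [Group H] [Finite H]

lemma card_sylow_three_eq_four (hcyc : ∀ K : Subgroup H, K.Normal → IsCyclic K → K = ⊥)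
    {m : ℕ} (hm : m ∣ 8) (hH : Nat.card H = 3 * m) :
    Nat.card (Sylow 3 H) = 4 := by
  have h3 := Fact.mk Nat.prime_three
  have hm3 : ¬3 ∣ m := fun h ↦ by have := h.trans hm; omega
  let P : Sylow 3 H := default
  have hP : Nat.card P = 3 := card_sylow_of_card_eq (k := 1) hH hm3 P
  have hindex : (P : Subgroup H).index = m := by
    have hmul := (P : Subgroup H).card_mul_index
    rw [hP, hH] at hmul
    exact Nat.eq_of_mul_eq_mul_left (by norm_num) hmul
  have hdvd : Nat.card (Sylow 3 H) ∣ 8 := P.card_dvd_index.trans (hindex ▸ hm)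
  have hmod : Nat.card (Sylow 3 H) % 3 = 1 := card_sylow_modEq_one 3 H
  have hne : Nat.card (Sylow 3 H) ≠ 1 := fun h1 ↦ by
    have := (Nat.card_eq_one_iff_unique.mp h1).1
    have hbot := hcyc P (Sylow.normal_of_subsingleton P) (isCyclic_of_prime_card hP)
    rw [← Subgroup.card_eq_one, hP] at hbot
    omega
  have hle := Nat.le_of_dvd (by norm_num) hdvd
  interval_cases Nat.card (Sylow 3 H) <;> omega

lemma injective_toPermHom_sylow_three
    (hcyc : ∀ K : Subgroup H, K.Normal → IsCyclic K → K = ⊥)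
    {m : ℕ} (hm : m ∣ 2) (hH : Nat.card H = 3 * (4 * m)) :
    Function.Injective (toPermHom H (Sylow 3 H)) := by
  have h3 := Fact.mk Nat.prime_three
  have hm8 : 4 * m ∣ 8 := mul_dvd_mul_left 4 hm
  have hm3 : ¬3 ∣ 4 * m := fun h ↦ by have := h.trans hm8; omega
  have hsylow := card_sylow_three_eq_four hcyc hm8 hH
  have hcard (Q : Sylow 3 H) : Nat.card Q = 3 := card_sylow_of_card_eq (k := 1) hH hm3 Q
  have : Nontrivial (Sylow 3 H) := Finite.one_lt_card_iff_nontrivial.mp (by omega)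
  obtain ⟨P, P', hne⟩ := exists_pair_ne (Sylow 3 H)
  refine injective_toPermHom_sylow hcyc (disjoint_of_card_prime ((hcard P).symm ▸ h3.out)
    ((hcard P).trans (hcard P').symm) fun h ↦ hne (Sylow.ext h)) fun k hk hk3 ↦ ?_
  have hN : Nat.card (Subgroup.normalizer (P : Set H)) = 3 * m := by
    have hmul := card_sylow_mul_card_normalizer P
    rw [hsylow, hH] at hmul
    omega
  have hcop : k.Coprime 3 := ((h3.out.coprime_iff_not_dvd).mpr hk3).symm
  have hk2 : k ∣ 2 := (hcop.dvd_of_dvd_mul_left (hN ▸ hk)).trans hm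
  exact ((Nat.dvd_prime Nat.prime_two).mp hk2).imp_right
    (by rintro rfl; exact Nat.prime_two)

theorem nonempty_mulEquiv_alternatingGroup_four
    (hcyc : ∀ K : Subgroup H, K.Normal → IsCyclic K → K = ⊥) (hH : Nat.card H = 12) :
    Nonempty (H ≃* alternatingGroup (Fin 4)) :=
  nonempty_mulEquiv_alternatingGroup
    (injective_toPermHom_sylow_three (m := 1) hcyc (by norm_num) hH)
    (card_sylow_three_eq_four (m := 4) hcyc (by norm_num) hH) (by rw [hH]; rfl)

theorem nonempty_mulEquiv_perm_four
    (hcyc : ∀ K : Subgroup H, K.Normal → IsCyclic K → K = ⊥) (hH : Nat.card H = 24) :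
    Nonempty (H ≃* Equiv.Perm (Fin 4)) :=
  nonempty_mulEquiv_perm (injective_toPermHom_sylow_three (m := 2) hcyc (by norm_num) hH)
    (card_sylow_three_eq_four (m := 8) hcyc (by norm_num) hH) (by rw [hH]; rfl)

end GroupsOfOrderTwelveAndTwentyFour

section GroupsOfOrderSixty

open MulAction

variable {H : Type*} [Group H]

/-- Under these hypotheses distinct Sylow `p`-subgroups meet trivially, so that their nontrivial
elements partition the conjugacy class of `t`. -/
lemma card_sylow_mul_card_sub_one [Finite H] {p : ℕ} [Fact p.Prime] {P : Sylow p H} {t : H}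
    (htP : t ∈ P) (ht : t ≠ 1)
    (hcen : ∀ Q : Sylow p H, ∀ s ∈ Q, s ≠ 1 → (Q : Subgroup H) = Subgroup.centralizer {s})
    (hconj : ∀ Q : Sylow p H, ∀ s ∈ Q, s ≠ 1 → IsConj s t) :
    Nat.card (Sylow p H) * (Nat.card P - 1) = (orbit (ConjAct H) t).ncard := by
  have := Fintype.ofFinite (Sylow p H)
  have hunion : orbit (ConjAct H) t = ⋃ Q : Sylow p H, (Q : Set H) \ {1} := by
    ext s
    simp only [ConjAct.mem_orbit_conjAct, Set.mem_iUnion, Set.mem_sdiff, Set.mem_singleton_iff]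
    refine ⟨fun hs ↦ ?_, fun ⟨Q, hsQ, hs⟩ ↦ hconj Q s hsQ hs⟩
    obtain ⟨g, rfl⟩ := isConj_iff.mp hs.symm
    refine ⟨g • P, ?_, by rwa [conj_eq_one_iff]⟩
    simpa [Sylow.coe_smul, Set.mem_smul_set_iff_inv_smul_mem, mul_assoc] using htP
  have hdisj : Pairwise (Function.onFun Disjoint fun Q : Sylow p H ↦ (Q : Set H) \ {1}) := by
    refine fun Q R hne ↦ Set.disjoint_left.mpr fun s ⟨hsQ, hs⟩ ⟨hsR, _⟩ ↦ hne (Sylow.ext ?_)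
    exact (hcen Q s hsQ hs).trans (hcen R s hsR hs).symm
  have hcard (Q : Sylow p H) : Nat.card ((Q : Set H) \ {1} : Set H) = Nat.card P - 1 := by
    have hone : (1 : H) ∈ (Q : Set H) := Q.one_mem
    rw [Nat.card_coe_set_eq, Set.ncard_sdiff_singleton_of_mem hone]
    exact congrArg (· - 1) (Nat.card_congr (Q.equiv P).toEquiv)
  rw [← Nat.card_coe_set_eq, hunion, Nat.card_congr (Set.unionEqSigmaOfDisjoint hdisj),
    Nat.card_sigma, Finset.sum_congr rfl fun Q _ ↦ hcard Q]
  simp [Nat.card_eq_fintype_card]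

lemma sylow_eq_centralizer {p : ℕ} [Fact p.Prime] {P : Sylow p H} (hP : Nat.card P = p ^ 2)
    {t : H} [Finite (Subgroup.centralizer {t})]
    (hcen : Nat.card (Subgroup.centralizer {t}) ≤ p ^ 2) (htP : t ∈ P) :
    (P : Subgroup H) = Subgroup.centralizer {t} := by
  refine Subgroup.eq_of_le_of_card_ge (fun x hx ↦ ?_) (hP ▸ hcen)
  have hcomm := (IsPGroup.isMulCommutative_of_card_eq_prime_sq hP).is_comm.comm ⟨x, hx⟩ ⟨t, htP⟩
  exact Subgroup.mem_centralizer_singleton_iff.mpr (congrArg Subtype.val hcomm)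

lemma two_dvd_orderOf_of_mem_sylow {P : Sylow 2 H} {t : H} (htP : t ∈ P) (ht : t ≠ 1) :
    2 ∣ orderOf t := by
  have hdvd := P.isPGroup'.dvd_orderOf (g := ⟨t, htP⟩) (by simpa [Subtype.ext_iff] using ht)
  rwa [Subgroup.orderOf_mk] at hdvd

variable [Finite H]

lemma card_sylow_two_eq_four (hH : Nat.card H = 60) (P : Sylow 2 H) : Nat.card P = 2 ^ 2 :=
  have := Fact.mk Nat.prime_two
  card_sylow_of_card_eq (m := 15) (by omega) (by norm_num) P

lemma sylow_two_eq_centralizer (hH : Nat.card H = 60)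
    (hcen : ∀ t : H, 2 ∣ orderOf t → Nat.card (Subgroup.centralizer {t}) ≤ 4)
    (P : Sylow 2 H) (t : H) (htP : t ∈ P) (ht : t ≠ 1) :
    (P : Subgroup H) = Subgroup.centralizer {t} :=
  have := Fact.mk Nat.prime_two
  sylow_eq_centralizer (card_sylow_two_eq_four hH P)
    (hcen t (two_dvd_orderOf_of_mem_sylow htP ht)) htP

lemma card_sylow_two_eq_five (hH : Nat.card H = 60)
    (hcen : ∀ t : H, 2 ∣ orderOf t → Nat.card (Subgroup.centralizer {t}) ≤ 4)
    (hconj : ∀ s t : H, 2 ∣ orderOf s → 2 ∣ orderOf t → IsConj s t) :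
    Nat.card (Sylow 2 H) = 5 := by
  have := Fact.mk Nat.prime_two
  have eq_centralizer := sylow_two_eq_centralizer hH hcen
  let P : Sylow 2 H := default
  have hP := card_sylow_two_eq_four hH P
  obtain ⟨t, htP, ht⟩ := (P : Subgroup H).bot_or_exists_ne_one.resolve_left fun hbot ↦ by
    rw [hbot, Subgroup.card_bot] at hP
    omega
  have hteven := two_dvd_orderOf_of_mem_sylow htP ht
  have hclass := card_stabilizer_mul_ncard_orbit (H := ConjAct H) t
  rw [← Subgroup.nat_card_centralizer_nat_card_stabilizer, ← eq_centralizer P t htP ht,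
    hP, ← card_sylow_mul_card_sub_one htP ht eq_centralizer
      (fun Q s hsQ hs ↦ hconj s t (two_dvd_orderOf_of_mem_sylow hsQ hs) hteven), hP,
    Nat.card_congr ConjAct.ofConjAct.toEquiv, hH] at hclass
  omega

theorem nonempty_mulEquiv_alternatingGroup_five
    (hcyc : ∀ K : Subgroup H, K.Normal → IsCyclic K → K = ⊥) (hH : Nat.card H = 60)
    (hcen : ∀ t : H, 2 ∣ orderOf t → Nat.card (Subgroup.centralizer {t}) ≤ 4)
    (hconj : ∀ s t : H, 2 ∣ orderOf s → 2 ∣ orderOf t → IsConj s t) :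
    Nonempty (H ≃* alternatingGroup (Fin 5)) := by
  have := Fact.mk Nat.prime_two
  have hfive := card_sylow_two_eq_five hH hcen hconj
  have : Nontrivial (Sylow 2 H) := Finite.one_lt_card_iff_nontrivial.mp (by omega)
  obtain ⟨P, Q, hne⟩ := exists_pair_ne (Sylow 2 H)
  have eq_centralizer := sylow_two_eq_centralizer hH hcen
  have hdisj : Disjoint (P : Subgroup H) Q := by
    refine Subgroup.disjoint_def.mpr fun {s} hsP hsQ ↦ ?_
    by_contra hs
    exact hne (Sylow.ext ((eq_centralizer P s hsP hs).trans (eq_centralizer Q s hsQ hs).symm))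
  have hN : Nat.card (Subgroup.normalizer (P : Set H)) = 4 * 3 := by
    have hmul := card_sylow_mul_card_normalizer P
    rw [hfive, hH] at hmul
    omega
  refine nonempty_mulEquiv_alternatingGroup (injective_toPermHom_sylow hcyc hdisj
    fun k hk hk2 ↦ ?_) hfive (by rw [hH]; rfl)
  have hcop : k.Coprime 4 :=
    ((Nat.prime_two.coprime_iff_not_dvd.mpr hk2).symm).pow_right 2
  exact ((Nat.dvd_prime Nat.prime_three).mp (hcop.dvd_of_dvd_mul_left (hN ▸ hk))).imp_right
    (by rintro rfl; exact Nat.prime_three)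

end GroupsOfOrderSixty

section PoleActions

open MulAction

variable {H X : Type*} [Group H] [MulAction H X]

lemma isConj_of_card_stabilizer_eq_two {x y : X} (hy : Nat.card (stabilizer H y) = 2)
    (hxy : x ∈ orbit H y) {s t : H} (hs : s ≠ 1) (ht : t ≠ 1) (hsx : s • x = x)
    (hty : t • y = y) : IsConj s t := by
  obtain ⟨g, rfl⟩ := hxy
  have hconj : g⁻¹ * s * g ∈ stabilizer H y := by
    simpa [mul_smul, inv_smul_eq_iff] using hsx
  obtain ⟨u, -, huniq⟩ := (Nat.card_eq_two_iff' (1 : stabilizer H y)).mp hy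
  have heq : (⟨g⁻¹ * s * g, hconj⟩ : stabilizer H y) = ⟨t, hty⟩ := by
    rw [huniq ⟨t, hty⟩ (by simpa [Subtype.ext_iff] using ht), huniq ⟨_, hconj⟩]
    simpa [Subtype.ext_iff, mul_assoc, inv_mul_eq_one, eq_comm] using hs
  exact isConj_iff.mpr ⟨g⁻¹, by simpa using congrArg Subtype.val heq⟩

namespace IsPoleAction

variable [Finite H] [Finite X]

lemma card_centralizer_le (hX : IsPoleAction H X) {t : H} (ht : t ≠ 1) {x : X} (hx : t • x = x) :
    Nat.card (Subgroup.centralizer {t}) ≤ Nat.card (stabilizer H x) * 2 := by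
  have horbit : orbit (Subgroup.centralizer {t}) x ⊆ fixedBy X t := by
    rintro _ ⟨g, rfl⟩
    have hcomm := Subgroup.mem_centralizer_singleton_iff.mp g.2
    change t • (g : H) • x = (g : H) • x
    rw [← mul_smul, ← hcomm, mul_smul, hx]
  have hstab : Nat.card (stabilizer (Subgroup.centralizer {t}) x) ≤ Nat.card (stabilizer H x) := by
    let ι (c : stabilizer (Subgroup.centralizer {t}) x) : stabilizer H x := ⟨c.1.1, c.2⟩
    have hι : Function.Injective ι := fun c d hcd ↦
      Subtype.ext (Subtype.ext (Subtype.mk.inj hcd))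
    exact Nat.card_le_card_of_injective ι hι
  rw [← card_stabilizer_mul_ncard_orbit (H := Subgroup.centralizer {t}) x,
    ← hX.ncard_fixedBy t ht]
  exact Nat.mul_le_mul hstab (Set.ncard_le_ncard horbit)

theorem nonempty_mulEquiv [Nontrivial H] (hX : IsPoleAction H X) :
    Nonempty (H ≃* alternatingGroup (Fin 4)) ∨ Nonempty (H ≃* Equiv.Perm (Fin 4)) ∨
      Nonempty (H ≃* alternatingGroup (Fin 5)) := by
  have hcyc (K : Subgroup H) := hX.eq_bot_of_normal_of_isCyclic (K := K)
  rcases hX.card_eq with h12 | h24 | ⟨h60, hstab, horbit⟩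
  · exact .inl (nonempty_mulEquiv_alternatingGroup_four hcyc h12)
  · exact .inr (.inl (nonempty_mulEquiv_perm_four hcyc h24))
  have ne_one {t : H} (ht : 2 ∣ orderOf t) : t ≠ 1 := by
    rintro rfl
    rw [orderOf_one] at ht
    omega
  have exists_pole {t : H} (ht : 2 ∣ orderOf t) :
      ∃ x : X, t • x = x ∧ Nat.card (stabilizer H x) = 2 := by
    obtain ⟨x, hx⟩ := hX.exists_smul_eq_self (ne_one ht)
    refine ⟨x, hx, ?_⟩
    have hdvd := ht.trans (Subgroup.orderOf_dvd_natCard _ (mem_stabilizer_iff.mpr hx))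
    have hmem := hstab x
    simp only [Finset.mem_insert, Finset.mem_singleton] at hmem
    omega
  refine .inr (.inr (nonempty_mulEquiv_alternatingGroup_five hcyc h60 (fun t ht ↦ ?_)
    fun s t hs ht ↦ ?_))
  · obtain ⟨x, hx, hcard⟩ := exists_pole ht
    exact (hX.card_centralizer_le (ne_one ht) hx).trans_eq (by rw [hcard])
  · obtain ⟨x, hx, hcardx⟩ := exists_pole hs
    obtain ⟨y, hy, hcardy⟩ := exists_pole ht
    exact isConj_of_card_stabilizer_eq_two hcardy (horbit y x (hcardy.trans hcardx.symm))
      (ne_one hs) (ne_one ht) hx hy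

end IsPoleAction

end PoleActions

section FixedVectors

variable {K V : Type*} [Field K] [CharZero K] [AddCommGroup V] [Module K V]
  {e : V ≃ₗ[K] V} {B : LinearMap.BilinForm K V}

lemma eq_one_of_mem_dilatransvections [FiniteDimensional K V]
    (he : e ∈ LinearEquiv.dilatransvections K V) (hdet : LinearMap.det (e : V →ₗ[K] V) = 1)
    (hfin : IsOfFinOrder e) : e = 1 := by
  obtain ⟨f, v, hfv⟩ := he
  have hv : f v = 0 := by
    rw [hfv, LinearMap.transvection.det] at hdet
    simpa using hdet
  have hpow (n : ℕ) (x : V) : (e ^ n) x = x + (n * f x) • v := by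
    induction n with
    | zero => simp
    | succ n ih =>
      rw [pow_succ', LinearEquiv.mul_apply, ih, ← LinearEquiv.coe_coe, hfv,
        LinearMap.transvection.apply]
      simp only [map_add, map_smul, hv, smul_zero, add_zero, Nat.cast_add, Nat.cast_one]
      module
  obtain ⟨n, hn, hen⟩ := hfin.exists_pow_eq_one
  ext x
  have hx := hpow n x
  rw [hen, LinearEquiv.coe_one, id, left_eq_add, mul_smul] at hx
  have hfx : f x • v = 0 := (smul_eq_zero.mp hx).resolve_left (by exact_mod_cast hn.ne')
  simpa [hfx] using hpow 1 x

lemma fixedSubmodule_ne_bot_of_odd_finrank [FiniteDimensional K V] (hB : B.Nondegenerate)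
    (he : ∀ x y, B (e x) (e y) = B x y) (hdet : LinearMap.det (e : V →ₗ[K] V) = 1)
    (hodd : Odd (Module.finrank K V)) : (e : V →ₗ[K] V).fixedSubmodule ≠ ⊥ := by
  set T : V →ₗ[K] V := (e : V →ₗ[K] V) - LinearMap.id with hT
  let D := B.toDual hB
  -- `B (T x) (e y) = - B x (T y)`, so `e` times the adjoint of `T` is `-T` up to conjugation.
  have hadj : (e : V →ₗ[K] V).dualMap ∘ₗ (D ∘ₗ T ∘ₗ D.symm) = -T.dualMap := by
    refine LinearMap.ext fun φ ↦ LinearMap.ext fun y ↦ ?_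
    obtain ⟨x, rfl⟩ := D.surjective φ
    simp [hT, D, LinearMap.BilinForm.toDual_def, he]
  have hdetT : LinearMap.det T = -LinearMap.det T := by
    have := congrArg LinearMap.det hadj
    rwa [LinearMap.det_comp, LinearMap.det_dualMap, hdet, one_mul, LinearMap.det_conj,
      ← neg_one_smul K T.dualMap, LinearMap.det_smul, Subspace.dual_finrank_eq, hodd.neg_one_pow,
      LinearMap.det_dualMap, neg_one_mul] at this
  rw [LinearMap.fixedSubmodule_eq_ker]
  exact (LinearMap.det_eq_zero_iff_ker_ne_bot).mp (self_eq_neg.mp hdetT)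

lemma finrank_fixedSubmodule_eq_one (hV : Module.finrank K V = 3) (hB : B.Nondegenerate)
    (he : ∀ x y, B (e x) (e y) = B x y) (hdet : LinearMap.det (e : V →ₗ[K] V) = 1)
    (hfin : IsOfFinOrder e) (h1 : e ≠ 1) :
    Module.finrank K (e : V →ₗ[K] V).fixedSubmodule = 1 := by
  have : FiniteDimensional K V := Module.finite_of_finrank_eq_succ hV
  have hpos : Module.finrank K (e : V →ₗ[K] V).fixedSubmodule ≠ 0 :=
    fun h ↦ fixedSubmodule_ne_bot_of_odd_finrank hB he hdet (by rw [hV]; decide)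
      (Submodule.finrank_eq_zero.mp h)
  have hquot : ¬ Module.finrank K (V ⧸ (e : V →ₗ[K] V).fixedSubmodule) ≤ 1 := fun h ↦
    h1 (eq_one_of_mem_dilatransvections
      (LinearEquiv.mem_dilatransvections_iff_finrank_quotient.mpr h) hdet hfin)
  have := (e : V →ₗ[K] V).fixedSubmodule.finrank_quotient_add_finrank
  omega

-- Averaging over the powers of `e` projects any vector onto the fixed ones.
lemma eq_zero_of_forall_fixed_apply_eq_zero (hB : B.Nondegenerate)
    (he : ∀ x y, B (e x) (e y) = B x y) (hfin : IsOfFinOrder e) {w : V} (hw : e w = w)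
    (hwy : ∀ y, e y = y → B w y = 0) : w = 0 := by
  refine hB.1 w fun x ↦ ?_
  obtain ⟨n, hn, hen⟩ := hfin.exists_pow_eq_one
  have hinv (k : ℕ) : B w ((e ^ k) x) = B w x := by
    induction k with
    | zero => simp
    | succ k ih =>
      calc B w ((e ^ (k + 1)) x) = B (e w) (e ((e ^ k) x)) := by
            rw [hw, pow_succ', LinearEquiv.mul_apply]
        _ = B w x := by rw [he, ih]
  have hfix : e (∑ k ∈ Finset.range n, (e ^ k) x) = ∑ k ∈ Finset.range n, (e ^ k) x := by
    have := (Finset.sum_range_succ (fun k ↦ (e ^ k) x) n).symm.trans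
      (Finset.sum_range_succ' (fun k ↦ (e ^ k) x) n)
    simpa [hen, map_sum, pow_succ', LinearEquiv.mul_apply] using this.symm
  have hsum := hwy _ hfix
  rw [map_sum, Finset.sum_congr rfl fun k _ ↦ hinv k, Finset.sum_const, Finset.card_range,
    smul_eq_zero] at hsum
  exact hsum.resolve_left hn.ne'

lemma ncard_setOf_fixed_apply_self_eq_one [IsAlgClosed K] (hV : Module.finrank K V = 3)
    (hB : B.Nondegenerate) (he : ∀ x y, B (e x) (e y) = B x y)
    (hdet : LinearMap.det (e : V →ₗ[K] V) = 1) (hfin : IsOfFinOrder e) (h1 : e ≠ 1) :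
    {v | e v = v ∧ B v v = 1}.ncard = 2 := by
  obtain ⟨⟨w, hw⟩, hw0, hspan⟩ :=
    finrank_eq_one_iff'.mp (finrank_fixedSubmodule_eq_one hV hB he hdet hfin h1)
  replace hw : e w = w := hw
  replace hspan (y : V) (hy : e y = y) : ∃ c : K, c • w = y :=
    (hspan ⟨y, hy⟩).imp fun _ hc ↦ congrArg Subtype.val hc
  replace hw0 : w ≠ 0 := by simpa using hw0
  have hww : B w w ≠ 0 := fun h ↦ hw0 <|
    eq_zero_of_forall_fixed_apply_eq_zero hB he hfin hw fun y hy ↦ by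
      obtain ⟨c, rfl⟩ := hspan y hy
      rw [map_smul, h, smul_zero]
  obtain ⟨r, hr⟩ := IsAlgClosed.exists_pow_nat_eq (B w w)⁻¹ two_pos
  have hr0 : r ≠ 0 := by
    rintro rfl
    exact inv_ne_zero hww (by simpa using hr.symm)
  have hset : {v | e v = v ∧ B v v = 1} = {r • w, -(r • w)} := by
    ext v
    simp only [Set.mem_ofPred_eq, Set.mem_insert_iff, Set.mem_singleton_iff]
    constructor
    · rintro ⟨hv, hvv⟩
      obtain ⟨c, rfl⟩ := hspan v hv
      have hc : c ^ 2 = r ^ 2 := by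
        rw [hr]
        refine eq_inv_of_mul_eq_one_left ?_
        simpa [pow_two, mul_assoc] using hvv
      rcases sq_eq_sq_iff_eq_or_eq_neg.mp hc with rfl | rfl <;> simp
    · have hrw : r * (r * B w w) = 1 := by rw [← mul_assoc, ← pow_two, hr, inv_mul_cancel₀ hww]
      rintro (rfl | rfl) <;> simp [hw, hrw]
  have := IsAddTorsionFree.of_isTorsionFree K V
  rw [hset, Set.ncard_pair (self_ne_neg.mpr (smul_ne_zero hr0 hw0))]

end FixedVectors

section Poles

open MulAction Module

variable {K H V : Type*} [Field K] [Group H] [AddCommGroup V] [Module K V] [DistribMulAction H V]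

section Irreducible

variable [SMulCommClass H K V]

lemma eq_bot_or_eq_top_of_isIrreducible
    [(Representation.ofDistribMulAction K H V).IsIrreducible] {W : Submodule K V}
    (hW : ∀ h : H, ∀ v ∈ W, h • v ∈ W) : W = ⊥ ∨ W = ⊤ :=
  (eq_bot_or_eq_top (⟨W, fun h _ ↦ hW h _⟩ :
    Subrepresentation (Representation.ofDistribMulAction K H V))).imp
    (congrArg Subrepresentation.toSubmodule) (congrArg Subrepresentation.toSubmodule)

lemma isIrreducible_ofDistribMulAction [Nontrivial V]
    (h : ∀ W : Submodule K V, (∀ h : H, ∀ v ∈ W, h • v ∈ W) → W = ⊥ ∨ W = ⊤) :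
    (Representation.ofDistribMulAction K H V).IsIrreducible where
  exists_pair_ne := ⟨⊥, ⊤, fun hne ↦ bot_ne_top (congrArg Subrepresentation.toSubmodule hne)⟩
  eq_bot_or_eq_top W := (h W.toSubmodule fun g _ hv ↦ W.apply_mem_toSubmodule g hv).imp
    (Subrepresentation.toSubmodule_injective ·) (Subrepresentation.toSubmodule_injective ·)

lemma finrank_le_ncard_orbit [Finite H]
    [(Representation.ofDistribMulAction K H V).IsIrreducible] {v : V} (hv : v ≠ 0) :
    finrank K V ≤ (orbit H v).ncard := by
  have hspan : Submodule.span K (orbit H v) = ⊤ := by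
    refine (eq_bot_or_eq_top_of_isIrreducible (H := H) fun h w hw ↦ ?_).resolve_left
      fun h ↦ hv (Submodule.span_eq_bot.mp h v (mem_orbit_self v))
    have hmap : (Submodule.span K (orbit H v)).map (DistribSMul.toLinearMap K V h) ≤
        Submodule.span K (orbit H v) := by
      rw [Submodule.map_span]
      exact Submodule.span_mono (smul_orbit_subset h v)
    exact hmap (Submodule.mem_map_of_mem hw)
  have : Fintype (orbit H v) := (Set.finite_range _).fintype
  rw [← finrank_top, ← hspan, Set.ncard_eq_toFinset_card']
  exact finrank_span_le_card (orbit H v)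

end Irreducible

variable {B : LinearMap.BilinForm K V}

/-- The poles of a group `H` of isometries of a bilinear form `B`: the vectors of norm one that lie
on the axis of some nontrivial element of `H`. -/
def poles (hB : ∀ (h : H) (x y : V), B (h • x) (h • y) = B x y) : SubMulAction H V where
  carrier := {v | B v v = 1 ∧ ∃ h : H, h ≠ 1 ∧ h • v = v}
  smul_mem' := by
    rintro g v ⟨hv, h, h1, hhv⟩
    refine ⟨by rw [hB, hv], g * h * g⁻¹, by simpa using h1, ?_⟩
    rw [mul_smul, inv_smul_smul, mul_smul, hhv]

variable [CharZero K] [IsAlgClosed K] [SMulCommClass H K V] [FaithfulSMul H V] [Finite H]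
  (hV : finrank K V = 3) (hBn : B.Nondegenerate)
  (hB : ∀ (h : H) (x y : V), B (h • x) (h • y) = B x y)
  (hdet : ∀ h : H, LinearMap.det (DistribSMul.toLinearMap K V h) = 1)

include hV hBn hB hdet

lemma ncard_setOf_smul_eq_self {h : H} (h1 : h ≠ 1) : {v | h • v = v ∧ B v v = 1}.ncard = 2 :=
  ncard_setOf_fixed_apply_self_eq_one (e := DistribMulAction.toModuleAut K V h) hV hBn (hB h)
    (hdet h) ((DistribMulAction.toModuleAut K V).isOfFinOrder (isOfFinOrder_of_finite h)) fun he ↦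
      h1 (eq_of_smul_eq_smul fun v : V ↦ by simpa using LinearEquiv.congr_fun he v)

lemma finite_poles : Finite (poles hB) := by
  have hfin : {v : V | B v v = 1 ∧ ∃ h : H, h ≠ 1 ∧ h • v = v}.Finite := by
    refine (Set.finite_iUnion fun h : {h : H // h ≠ 1} ↦ Set.finite_of_ncard_ne_zero
      (s := {v | (h : H) • v = v ∧ B v v = 1}) ?_).subset ?_
    · rw [ncard_setOf_smul_eq_self hV hBn hB hdet h.2]
      exact two_ne_zero
    · rintro v ⟨hv, h, h1, hhv⟩
      exact Set.mem_iUnion.mpr ⟨⟨h, h1⟩, hhv, hv⟩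
  exact hfin

lemma isPoleAction_poles [(Representation.ofDistribMulAction K H V).IsIrreducible] :
    IsPoleAction H (poles hB) where
  ncard_fixedBy h h1 := by
    have himage : Subtype.val '' fixedBy (poles hB) h = {v | h • v = v ∧ B v v = 1} := by
      ext v
      constructor
      · rintro ⟨x, hx, rfl⟩
        exact ⟨congrArg Subtype.val hx, x.2.1⟩
      · rintro ⟨hhv, hv⟩
        exact ⟨⟨v, hv, h, h1, hhv⟩, Subtype.ext hhv, rfl⟩
    rw [← Set.ncard_image_of_injective _ Subtype.val_injective, himage,
      ncard_setOf_smul_eq_self hV hBn hB hdet h1]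
  stabilizer_ne_bot := by
    rintro ⟨v, hv, h, h1, hhv⟩
    exact (Subgroup.ne_bot_iff_exists_ne_one).mpr ⟨⟨h, Subtype.ext hhv⟩,
      fun h' ↦ h1 (congrArg Subtype.val h')⟩
  three_le_ncard_orbit x := by
    rw [← hV, ← Set.ncard_image_of_injective _ Subtype.val_injective, SubMulAction.val_image_orbit]
    refine finrank_le_ncard_orbit (K := K) (H := H) fun hx ↦ zero_ne_one (α := K) ?_
    simpa [hx] using x.2.1

theorem nonempty_mulEquiv_of_isometries
    [(Representation.ofDistribMulAction K H V).IsIrreducible] :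
    Nonempty (H ≃* alternatingGroup (Fin 4)) ∨ Nonempty (H ≃* Equiv.Perm (Fin 4)) ∨
      Nonempty (H ≃* alternatingGroup (Fin 5)) := by
  have : Nontrivial V := nontrivial_of_finrank_pos (R := K) (by omega)
  obtain ⟨v, hv⟩ := exists_ne (0 : V)
  have : Nontrivial H := by
    rw [← Finite.one_lt_card_iff_nontrivial]
    have := finrank_le_ncard_orbit (K := K) (H := H) hv
    have := Nat.le_of_dvd Nat.card_pos
      (Dvd.intro_left (Nat.card (stabilizer H v)) (card_stabilizer_mul_ncard_orbit v))
    omega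
  have := finite_poles hV hBn hB hdet
  exact (isPoleAction_poles hV hBn hB hdet).nonempty_mulEquiv

end Poles

section QuadraticForms

open MvPolynomial Module

section Polynomials

variable {σ K : Type*} [Field K]

lemma exists_dual_eq_eval {f : MvPolynomial σ K} (hf : f.IsHomogeneous 1) :
    ∃ φ : Dual K (σ → K), ∀ v, φ v = eval v f := by
  rw [← mem_homogeneousSubmodule, homogeneousSubmodule_one_eq_span_X] at hf
  induction hf using Submodule.span_induction with
  | mem f hf =>
    obtain ⟨i, rfl⟩ := hf
    exact ⟨LinearMap.proj i, fun v ↦ by simp⟩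
  | zero => exact ⟨0, fun v ↦ by simp⟩
  | add f g _ _ hf hg =>
    obtain ⟨φ, hφ⟩ := hf
    obtain ⟨ψ, hψ⟩ := hg
    exact ⟨φ + ψ, fun v ↦ by simp [hφ, hψ]⟩
  | smul a f _ hf =>
    obtain ⟨φ, hφ⟩ := hf
    exact ⟨a • φ, fun v ↦ by simp [hφ]⟩

lemma exists_bilinForm_eq_eval {f : MvPolynomial σ K} (hf : f.IsHomogeneous 2) :
    ∃ B : LinearMap.BilinForm K (σ → K), ∀ v, B v v = eval v f := by
  rw [← mem_homogeneousSubmodule, ← homogeneousSubmodule_one_pow, pow_two] at hf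
  induction hf using Submodule.mul_induction_on' with
  | mem_mul_mem f hf g hg =>
    obtain ⟨φ, hφ⟩ := exists_dual_eq_eval hf
    obtain ⟨ψ, hψ⟩ := exists_dual_eq_eval hg
    exact ⟨LinearMap.BilinForm.linMulLin φ ψ, fun v ↦ by simp [hφ, hψ]⟩
  | add f _ g _ hf hg =>
    obtain ⟨B, hB⟩ := hf
    obtain ⟨C, hC⟩ := hg
    exact ⟨B + C, fun v ↦ by simp [hB, hC]⟩

lemma exists_isSymm_bilinForm_eq_eval [NeZero (2 : K)] {f : MvPolynomial σ K}
    (hf : f.IsHomogeneous 2) :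
    ∃ B : LinearMap.BilinForm K (σ → K), B.IsSymm ∧ ∀ v, B v v = eval v f := by
  obtain ⟨B, hB⟩ := exists_bilinForm_eq_eval hf
  refine ⟨(2⁻¹ : K) • (B + B.flip), ⟨fun x y ↦ by simp [add_comm]⟩, fun v ↦ ?_⟩
  calc (2⁻¹ : K) * (B v v + B v v) = B v v := by rw [← two_mul, inv_mul_cancel_left₀ two_ne_zero]
    _ = eval v f := hB v

lemma exists_isHomogeneous_two_eval_eq [Finite σ] (B : LinearMap.BilinForm K (σ → K)) :
    ∃ f : MvPolynomial σ K, f.IsHomogeneous 2 ∧ ∀ v, eval v f = B v v := by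
  classical
  have := Fintype.ofFinite σ
  refine ⟨∑ i, ∑ j, X i * C (B.toMatrix' i j) * X j,
    .sum _ _ _ fun i _ ↦ .sum _ _ _ fun j _ ↦
      ((isHomogeneous_X K i).mul (isHomogeneous_C σ _)).mul (isHomogeneous_X K j), fun v ↦ ?_⟩
  conv_rhs => rw [← toBilin'_toMatrix' B, toBilin'_apply]
  simp

end Polynomials

section SemiInvariants

variable {K G V : Type*} [Field K] [Group G] [AddCommGroup V] [Module K V] [DistribMulAction G V]

lemma exists_monoidHom_of_forall_apply_smul_smul {B : LinearMap.BilinForm K V} (hB0 : B ≠ 0)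
    (hB : ∀ g : G, ∃ c : K, ∀ x y, B (g • x) (g • y) = c * B x y) :
    ∃ χ : G →* Kˣ, ∀ (g : G) (x y : V), B (g • x) (g • y) = χ g * B x y := by
  choose c hc using hB
  have hxy : ∃ x y, B x y ≠ 0 := by
    by_contra! h
    exact hB0 (LinearMap.ext₂ h)
  obtain ⟨x, y, hxy⟩ := hxy
  let χ : G →* K :=
    { toFun := c
      map_one' := mul_right_cancel₀ hxy (by rw [← hc, one_smul, one_smul, one_mul])
      map_mul' g h := mul_right_cancel₀ hxy (by
        rw [← hc, mul_smul, mul_smul, hc, hc, mul_assoc]) }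
  exact ⟨χ.toHomUnits, hc⟩

variable [SMulCommClass G K V]

lemma dual_eq_zero_of_forall_smul [(Representation.ofDistribMulAction K G V).IsIrreducible]
    (hV : 1 < finrank K V) {φ : Dual K V} (hφ : ∀ (g : G) (v : V), φ v = 0 → φ (g • v) = 0) :
    φ = 0 := by
  rcases eq_bot_or_eq_top_of_isIrreducible (W := φ.ker) fun g v ↦ hφ g v with hker | hker
  · have := LinearMap.finrank_le_finrank_of_injective (LinearMap.ker_eq_bot.mp hker)
    rw [finrank_self] at this
    omega
  · exact LinearMap.ker_eq_top.mp hker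

lemma apply_smul_smul_eq_mul [NeZero (2 : K)] {B : LinearMap.BilinForm K V} (hB : B.IsSymm) {g : G}
    {c : K} (hc : ∀ v, B (g • v) (g • v) = c * B v v) (x y : V) :
    B (g • x) (g • y) = c * B x y := by
  let T := DistribSMul.toLinearMap K V g
  have hBT : B.comp T T = c • B :=
    LinearMap.BilinForm.ext_of_isSymm ⟨fun x y ↦ hB.eq (g • x) (g • y)⟩
      ⟨fun x y ↦ by simp [hB.eq x y]⟩ hc
  exact LinearMap.congr_fun₂ hBT x y

lemma nondegenerate_of_forall_apply_smul_smul
    [FiniteDimensional K V] [(Representation.ofDistribMulAction K G V).IsIrreducible]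
    {B : LinearMap.BilinForm K V} (hB0 : B ≠ 0) {c : G → K}
    (hc : ∀ (g : G) (x y : V), B (g • x) (g • y) = c g * B x y) : B.Nondegenerate := by
  rw [LinearMap.BilinForm.nondegenerate_iff_ker_eq_bot]
  refine (eq_bot_or_eq_top_of_isIrreducible (H := G) fun g v hv ↦ ?_).resolve_right
    fun h ↦ hB0 (LinearMap.ker_eq_top.mp h)
  rw [LinearMap.mem_ker] at hv ⊢
  ext y
  rw [← smul_inv_smul g y, hc, hv, LinearMap.zero_apply, mul_zero, LinearMap.zero_apply]

variable {σ : Type*} [Fintype σ] [DistribMulAction G (σ → K)] [SMulCommClass G K (σ → K)]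
  [(Representation.ofDistribMulAction K G (σ → K)).IsIrreducible]

theorem exists_semiInvariant_iff_exists_bilinForm [Infinite K] [NeZero (2 : K)]
    (hσ : 1 < Fintype.card σ) :
    (∃ (f : MvPolynomial σ K) (d : ℕ), 1 ≤ d ∧ d ≤ 2 ∧ f ≠ 0 ∧ f.IsHomogeneous d ∧
      ∃ χ : G →* Kˣ, ∀ (g : G) (v : σ → K), eval (g⁻¹ • v) f = χ g * eval v f) ↔
    ∃ B : LinearMap.BilinForm K (σ → K), B ≠ 0 ∧ B.IsSymm ∧
      ∃ χ : G →* Kˣ, ∀ (g : G) (x y : σ → K), B (g • x) (g • y) = χ g * B x y := by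
  constructor
  · rintro ⟨f, d, hd1, hd2, hf, hfd, χ, hχ⟩
    have hf0 : ¬ ∀ v, eval v f = 0 := fun h ↦ hf (MvPolynomial.funext fun v ↦ by simp [h v])
    have hχ' (g : G) (v : σ → K) : eval (g • v) f = χ⁻¹ g * eval v f := by
      simpa using hχ g⁻¹ v
    interval_cases d
    · obtain ⟨φ, hφ⟩ := exists_dual_eq_eval hfd
      have hφ0 : φ = 0 := dual_eq_zero_of_forall_smul (G := G) (by simpa using hσ)
        fun g v hv ↦ by rw [hφ, hχ', ← hφ, hv, mul_zero]
      exact absurd (fun v ↦ by rw [← hφ, hφ0, LinearMap.zero_apply]) hf0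
    · obtain ⟨B, hB, hBf⟩ := exists_isSymm_bilinForm_eq_eval hfd
      refine ⟨B, ?_, hB, χ⁻¹, fun g ↦ apply_smul_smul_eq_mul hB fun v ↦ by rw [hBf, hBf, hχ']⟩
      rintro rfl
      exact hf0 fun v ↦ by rw [← hBf, LinearMap.zero_apply, LinearMap.zero_apply]
  · rintro ⟨B, hB0, hB, χ, hχ⟩
    obtain ⟨f, hf, hfB⟩ := exists_isHomogeneous_two_eval_eq B
    refine ⟨f, 2, one_le_two, le_rfl, ?_, hf, χ⁻¹, fun g v ↦ by simp [hfB, hχ]⟩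
    rintro rfl
    exact hB0 (LinearMap.BilinForm.ext_of_isSymm hB ⟨fun _ _ ↦ rfl⟩ fun v ↦ by simp [← hfB])

end SemiInvariants

end QuadraticForms

section Forward

open Matrix.SpecialLinearGroup

variable {n K : Type*} [Fintype n] [DecidableEq n] [Field K]

instance : FaithfulSMul (SpecialLinearGroup n K) (n → K) :=
  ⟨fun h ↦ Subtype.ext (mulVec_injective (funext h))⟩

lemma toPGL_eq_one_iff {g : SpecialLinearGroup n K} :
    toPGL g = 1 ↔ ∃ z : K, z ^ Fintype.card n = 1 ∧ (g : Matrix n n K) = z • 1 := by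
  rw [← MonoidHom.mem_ker, toPGL_ker, mem_center_iff]
  simp only [scalar_apply, smul_one_eq_diagonal, eq_comm]

lemma toPGL_eq_iff {g h : SpecialLinearGroup n K} :
    toPGL g = toPGL h ↔
      ∃ z : K, z ^ Fintype.card n = 1 ∧ (g : Matrix n n K) = z • (h : Matrix n n K) := by
  rw [← mul_inv_eq_one, ← map_inv, ← map_mul, toPGL_eq_one_iff]
  refine exists_congr fun z ↦ and_congr_right fun _ ↦ ⟨fun hz ↦ ?_, fun hz ↦ ?_⟩
  · rw [← inv_mul_cancel_right g h, coe_mul, hz, smul_mul_assoc, one_mul]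
  · rw [coe_mul, hz, smul_mul_assoc, ← coe_mul, mul_inv_cancel, coe_one]

lemma smul_eq_smul_of_coe_eq {g : SpecialLinearGroup n K} {z : K}
    (h : (g : Matrix n n K) = z • 1) (v : n → K) : g • v = z • v :=
  (congrArg (· *ᵥ v) h).trans (by rw [smul_mulVec, one_mulVec])

lemma pow_card_eq_one_of_apply_smul_smul {g : SpecialLinearGroup n K}
    {B : LinearMap.BilinForm K (n → K)} (hB : B.Nondegenerate) {c : K}
    (hc : ∀ x y, B (g • x) (g • y) = c * B x y) : c ^ Fintype.card n = 1 := by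
  have hcomp : B.comp (Matrix.toLin' g.1) (Matrix.toLin' g.1) = c • B := LinearMap.ext₂ hc
  have hdet := congrArg (fun C : LinearMap.BilinForm K (n → K) ↦ C.toMatrix'.det) hcomp
  have hB0 : B.toMatrix'.det ≠ 0 := by
    rwa [← LinearMap.BilinForm.nondegenerate_toBilin'_iff_det_ne_zero, toBilin'_toMatrix']
  simpa [LinearMap.BilinForm.toMatrix'_comp, hB0] using hdet.symm

variable {G : Subgroup (SpecialLinearGroup n K)}

/-- The homomorphism `g ↦ χ g • g` rescaling the elements of a group of matrices of determinant one
by a character with values in the roots of unity of order dividing `n`. -/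
def twist (χ : G →* Kˣ) (hχ : ∀ g, (χ g : K) ^ Fintype.card n = 1) :
    G →* SpecialLinearGroup n K where
  toFun g := ⟨(χ g : K) • ((g : SpecialLinearGroup n K) : Matrix n n K), by
    rw [det_smul, hχ, det_coe, one_mul]⟩
  map_one' := Subtype.ext (by simp)
  map_mul' g h := Subtype.ext <|
    show (χ (g * h) : K) • (g.1.1 * h.1.1) = ((χ g : K) • g.1.1) * ((χ h : K) • h.1.1) by
      rw [smul_mul_smul_comm, map_mul, Units.val_mul]

section Twist

variable {χ : G →* Kˣ} (hχ : ∀ g, (χ g : K) ^ Fintype.card n = 1)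

lemma twist_smul (g : G) (v : n → K) : twist χ hχ g • v = (χ g : K) • g • v :=
  smul_assoc (χ g : K) g.1.1 v

lemma map_toPGL_range_twist : (twist χ hχ).range.map toPGL = G.map toPGL := by
  rw [MonoidHom.map_range]
  conv_rhs => rw [← G.range_subtype, MonoidHom.map_range]
  congr 1
  ext1 g
  exact toPGL_eq_iff.mpr ⟨χ g, hχ g, rfl⟩

lemma isIrreducible_range_twist [Nonempty n]
    [(Representation.ofDistribMulAction K G (n → K)).IsIrreducible] :
    (Representation.ofDistribMulAction K (twist χ hχ).range (n → K)).IsIrreducible := by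
  refine isIrreducible_ofDistribMulAction fun W hW ↦
    eq_bot_or_eq_top_of_isIrreducible (H := G) fun g v hv ↦ ?_
  have hgv : twist χ hχ g • v ∈ W := hW ⟨_, g, rfl⟩ v hv
  rwa [twist_smul, W.smul_mem_iff (χ g).ne_zero] at hgv

end Twist

lemma injective_toPGL_comp_subtype (hn : Odd (Fintype.card n)) {B : LinearMap.BilinForm K (n → K)}
    (hB0 : B ≠ 0) (hB : ∀ (g : G) (x y : n → K), B (g • x) (g • y) = B x y) :
    Function.Injective (toPGL.comp G.subtype) := by
  rw [injective_iff_map_eq_one]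
  intro g hg
  obtain ⟨z, hz, hgz⟩ := toPGL_eq_one_iff.mp hg
  have hgv (v : n → K) : g • v = z • v := smul_eq_smul_of_coe_eq hgz v
  have hz2 : z ^ 2 = 1 := by
    by_contra hz2
    refine hB0 (LinearMap.ext₂ fun x y ↦ by_contra fun hxy ↦ hz2 (mul_right_cancel₀ hxy ?_))
    calc z ^ 2 * B x y = B (g • x) (g • y) := by simp [hgv, pow_two, mul_assoc]
      _ = 1 * B x y := by rw [hB, one_mul]
  obtain ⟨k, hk⟩ := hn
  have hz1 : z = 1 := by simpa [hk, pow_succ, pow_mul, hz2] using hz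
  exact eq_of_smul_eq_smul fun v : n → K ↦ by rw [hgv, hz1, one_smul, one_smul]

lemma exists_subgroup_isometries [(Representation.ofDistribMulAction K G (n → K)).IsIrreducible]
    (hn : Odd (Fintype.card n)) {B : LinearMap.BilinForm K (n → K)} (hB : B.Nondegenerate)
    {χ : G →* Kˣ} (hχ : ∀ (g : G) (x y : n → K), B (g • x) (g • y) = χ g * B x y) :
    ∃ H : Subgroup (SpecialLinearGroup n K), Nonempty (G.map toPGL ≃* H) ∧
      (Representation.ofDistribMulAction K H (n → K)).IsIrreducible ∧
      ∀ (h : H) (x y : n → K), B (h • x) (h • y) = B x y := by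
  have : Nonempty n := Fintype.card_pos_iff.mp hn.pos
  have hχn (g : G) : (χ g : K) ^ Fintype.card n = 1 :=
    pow_card_eq_one_of_apply_smul_smul hB (g := g.1) (hχ g)
  have ⟨k, hk⟩ := hn
  have hχk (g : G) : ((χ ^ k) g : K) ^ Fintype.card n = 1 := by
    rw [MonoidHom.pow_apply, Units.val_pow_eq_pow_val, pow_right_comm, hχn, one_pow]
  have hH (h : (twist (χ ^ k) hχk).range) (x y : n → K) : B (h • x) (h • y) = B x y := by
    obtain ⟨_, g, rfl⟩ := h
    calc B (twist (χ ^ k) hχk g • x) (twist (χ ^ k) hχk g • y)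
        = (χ g : K) ^ Fintype.card n * B x y := by
          simp [twist_smul, hχ, hk]
          ring
      _ = B x y := by rw [hχn, one_mul]
  have hrange : (toPGL.comp (twist (χ ^ k) hχk).range.subtype).range = G.map toPGL := by
    rw [MonoidHom.range_comp, Subgroup.range_subtype, map_toPGL_range_twist]
  exact ⟨(twist (χ ^ k) hχk).range, ⟨(MulEquiv.subgroupCongr hrange).symm.trans
    (MonoidHom.ofInjective (injective_toPGL_comp_subtype hn hB.ne_zero hH)).symm⟩,
    isIrreducible_range_twist hχk, hH⟩

theorem nonempty_mulEquiv_of_bilinForm [CharZero K] [IsAlgClosed K]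
    {G : Subgroup (SpecialLinearGroup (Fin 3) K)} [Finite G]
    [(Representation.ofDistribMulAction K G (Fin 3 → K)).IsIrreducible]
    {B : LinearMap.BilinForm K (Fin 3 → K)} (hB0 : B ≠ 0)
    {χ : G →* Kˣ} (hχ : ∀ (g : G) (x y : Fin 3 → K), B (g • x) (g • y) = χ g * B x y) :
    Nonempty (G.map toPGL ≃* alternatingGroup (Fin 4)) ∨
      Nonempty (G.map toPGL ≃* Equiv.Perm (Fin 4)) ∨
      Nonempty (G.map toPGL ≃* alternatingGroup (Fin 5)) := by
  have hB := nondegenerate_of_forall_apply_smul_smul hB0 hχ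
  obtain ⟨H, ⟨e⟩, _, hH⟩ := exists_subgroup_isometries (by decide) hB hχ
  have : Finite (G.map toPGL) := .of_surjective _ (toPGL.subgroupMap_surjective G)
  have : Finite H := .of_equiv _ e.toEquiv
  have hdet (h : H) : LinearMap.det (DistribSMul.toLinearMap K (Fin 3 → K) h) = 1 :=
    (LinearMap.det_toLin' h.1.1).trans h.1.2
  exact (nonempty_mulEquiv_of_isometries (by simp) hB hH hdet).imp
    (Nonempty.map e.trans) (Or.imp (Nonempty.map e.trans) (Nonempty.map e.trans))

end Forward

section PolyhedralPairs

open Equiv.Perm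

/-- A pair of an involution `x` and an element `y` of order dividing three whose product is
conjugate to its own inverse or to `y`. Each of `A₄`, `S₄` and `A₅` is generated by such a pair. -/
structure IsPolyhedralPair {Γ : Type*} [Group Γ] (x y : Γ) : Prop where
  sq_eq_one : x ^ 2 = 1
  ne_one : x ≠ 1
  pow_three_eq_one : y ^ 3 = 1
  isConj : IsConj (x * y) (x * y)⁻¹ ∨ IsConj (x * y) y

lemma IsPolyhedralPair.map {Γ Δ : Type*} [Group Γ] [Group Δ] {x y : Γ} (h : IsPolyhedralPair x y)
    {φ : Γ →* Δ} (hφ : Function.Injective φ) : IsPolyhedralPair (φ x) (φ y) where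
  sq_eq_one := by rw [← map_pow, h.sq_eq_one, map_one]
  ne_one := (map_ne_one_iff φ hφ).mpr h.ne_one
  pow_three_eq_one := by rw [← map_pow, h.pow_three_eq_one, map_one]
  isConj := by
    rw [← map_mul, ← map_inv]
    exact h.isConj.imp φ.map_isConj φ.map_isConj

lemma exists_isPolyhedralPair_of_mulEquiv {Γ Δ : Type*} [Group Γ] [Group Δ] {P : Subgroup Δ}
    (e : P ≃* Γ) (h : ∃ x y : Γ, IsPolyhedralPair x y ∧ Subgroup.closure {x, y} = ⊤) :
    ∃ x y : Δ, IsPolyhedralPair x y ∧ Subgroup.closure {x, y} = P := by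
  obtain ⟨x, y, hxy, htop⟩ := h
  let φ : Γ →* Δ := P.subtype.comp e.symm.toMonoidHom
  have hφ : φ.range = P := by
    rw [MonoidHom.range_comp, MonoidHom.range_eq_top.mpr e.symm.surjective,
      ← MonoidHom.range_eq_map, Subgroup.range_subtype]
  refine ⟨φ x, φ y, hxy.map (P.subtype_injective.comp e.symm.injective), ?_⟩
  rw [← Set.image_pair, ← MonoidHom.map_closure, htop, ← MonoidHom.range_eq_map, hφ]

lemma exists_isPolyhedralPair_alternatingGroup_four :
    ∃ x y : alternatingGroup (Fin 4), IsPolyhedralPair x y ∧ Subgroup.closure {x, y} = ⊤ := by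
  let x : alternatingGroup (Fin 4) := ⟨c[0, 1] * c[2, 3], mem_alternatingGroup.mpr (by decide)⟩
  let y : alternatingGroup (Fin 4) := ⟨c[0, 1, 2], mem_alternatingGroup.mpr (by decide)⟩
  refine ⟨x, y, ⟨by decide +kernel, by decide +kernel, by decide +kernel,
    .inr (isConj_iff.mpr (by decide +kernel))⟩, (Subgroup.eq_top_iff' _).mpr fun g ↦ ?_⟩
  have hword : ∀ g : alternatingGroup (Fin 4), ∃ i j : Fin 3, ∃ k : Fin 2,
      g = y ^ (i : ℕ) * x ^ (k : ℕ) * y ^ (j : ℕ) := by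
    decide +kernel
  obtain ⟨i, j, k, rfl⟩ := hword g
  have hx : x ∈ Subgroup.closure {x, y} := Subgroup.mem_closure_of_mem (by simp)
  have hy : y ∈ Subgroup.closure {x, y} := Subgroup.mem_closure_of_mem (by simp)
  exact mul_mem (mul_mem (pow_mem hy _) (pow_mem hx _)) (pow_mem hy _)

lemma index_dvd_two_of_dvd_card {Γ : Type*} [Group Γ] [Finite Γ] {H : Subgroup Γ} {m : ℕ}
    (hm : Nat.card Γ = m * 2) (hH : m ∣ Nat.card H) : H.index ∣ 2 := by
  have hm0 : 0 < m := Nat.pos_of_dvd_of_pos hH Nat.card_pos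
  exact Nat.dvd_of_mul_dvd_mul_left hm0 (by
    rw [← hm, ← H.card_mul_index]
    exact Nat.mul_dvd_mul_right hH _)

lemma exists_isPolyhedralPair_perm_four :
    ∃ x y : Equiv.Perm (Fin 4), IsPolyhedralPair x y ∧ Subgroup.closure {x, y} = ⊤ := by
  let x : Equiv.Perm (Fin 4) := c[0, 1]
  let y : Equiv.Perm (Fin 4) := c[1, 2, 3]
  refine ⟨x, y, ⟨by decide +kernel, by decide +kernel, by decide +kernel,
    .inl (isConj_iff.mpr (by decide +kernel))⟩, ?_⟩
  have hx : x ∈ Subgroup.closure {x, y} := Subgroup.mem_closure_of_mem (by simp)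
  have hy : y ∈ Subgroup.closure {x, y} := Subgroup.mem_closure_of_mem (by simp)
  have h3 : orderOf y = 3 := orderOf_eq_prime (by decide +kernel) (by decide +kernel)
  have h4 : orderOf (x * y) = 4 :=
    orderOf_eq_prime_pow (p := 2) (n := 1) (by decide +kernel) (by decide +kernel)
  have h12 : 3 * 4 ∣ Nat.card (Subgroup.closure {x, y}) :=
    Nat.Coprime.mul_dvd_of_dvd_of_dvd (by decide)
      (h3.symm.dvd.trans <| Subgroup.orderOf_dvd_natCard _ hy)
      (h4.symm.dvd.trans <| Subgroup.orderOf_dvd_natCard _ (mul_mem hx hy))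
  have hcard : Nat.card (Equiv.Perm (Fin 4)) = 3 * 4 * 2 := by
    rw [Nat.card_perm, Nat.card_fin]
    decide
  rcases (Nat.dvd_prime Nat.prime_two).mp (index_dvd_two_of_dvd_card hcard h12) with h | h
  · exact Subgroup.index_eq_one.mp h
  · rw [eq_alternatingGroup_of_index_eq_two h, mem_alternatingGroup] at hx
    exact absurd hx (by decide +kernel)

lemma exists_isPolyhedralPair_alternatingGroup_five :
    ∃ x y : alternatingGroup (Fin 5), IsPolyhedralPair x y ∧ Subgroup.closure {x, y} = ⊤ := by
  let x : alternatingGroup (Fin 5) := ⟨c[0, 1] * c[2, 3], mem_alternatingGroup.mpr (by decide)⟩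
  let y : alternatingGroup (Fin 5) := ⟨c[0, 2, 4], mem_alternatingGroup.mpr (by decide)⟩
  let w : alternatingGroup (Fin 5) := ⟨c[1, 3] * c[2, 4], mem_alternatingGroup.mpr (by decide)⟩
  refine ⟨x, y, ⟨by decide +kernel, by decide +kernel, by decide +kernel,
    .inl (isConj_iff.mpr ⟨w, by decide +kernel⟩)⟩, ?_⟩
  have hx : x ∈ Subgroup.closure {x, y} := Subgroup.mem_closure_of_mem (by simp)
  have hy : y ∈ Subgroup.closure {x, y} := Subgroup.mem_closure_of_mem (by simp)
  have h2 : orderOf x = 2 := orderOf_eq_prime (by decide +kernel) (by decide +kernel)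
  have h3 : orderOf y = 3 := orderOf_eq_prime (by decide +kernel) (by decide +kernel)
  have : Fact (Nat.Prime 5) := ⟨Nat.prime_five⟩
  have h5 : orderOf (x * y) = 5 := orderOf_eq_prime (by decide +kernel) (by decide +kernel)
  have h30 : 2 * 3 * 5 ∣ Nat.card (Subgroup.closure {x, y}) :=
    Nat.Coprime.mul_dvd_of_dvd_of_dvd (by decide) (Nat.Coprime.mul_dvd_of_dvd_of_dvd (by decide)
      (h2.symm.dvd.trans <| Subgroup.orderOf_dvd_natCard _ hx)
      (h3.symm.dvd.trans <| Subgroup.orderOf_dvd_natCard _ hy))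
      (h5.symm.dvd.trans <| Subgroup.orderOf_dvd_natCard _ (mul_mem hx hy))
  have hcard : Nat.card (alternatingGroup (Fin 5)) = 2 * 3 * 5 * 2 := by
    rw [nat_card_alternatingGroup, Nat.card_fin]
    decide
  rcases (Nat.dvd_prime Nat.prime_two).mp (index_dvd_two_of_dvd_card hcard h30) with h | h
  · exact Subgroup.index_eq_one.mp h
  · have := alternatingGroup.isSimpleGroup (α := Fin 5) (by simp)
    refine (Subgroup.normal_of_index_eq_two h).eq_bot_or_eq_top.resolve_left fun hbot ↦ ?_
    rw [hbot, Subgroup.mem_bot] at hx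
    exact absurd hx (by decide +kernel)

end PolyhedralPairs

section NormalForm

variable {K V : Type*} [Field K] [AddCommGroup V] [Module K V]

lemma exists_axis_of_involution [CharZero K] (hV : Module.finrank K V = 3) {a : V ≃ₗ[K] V}
    (ha : a ^ 2 = 1) (h1 : a ≠ 1) (hdet : LinearMap.det (a : V →ₗ[K] V) = 1) :
    ∃ v : V, v ≠ 0 ∧ a v = v ∧ ∀ x, ∃ c : K, a x = c • v - x := by
  have : FiniteDimensional K V := Module.finite_of_finrank_eq_succ hV
  have hquot : ¬ Module.finrank K (V ⧸ (a : V →ₗ[K] V).fixedSubmodule) ≤ 1 := fun h ↦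
    h1 (eq_one_of_mem_dilatransvections
      (LinearEquiv.mem_dilatransvections_iff_finrank_quotient.mpr h) hdet
      (isOfFinOrder_iff_pow_eq_one.mpr ⟨2, two_pos, ha⟩))
  have hfix : Module.finrank K (a : V →ₗ[K] V).fixedSubmodule ≤ 1 := by
    have := (a : V →ₗ[K] V).fixedSubmodule.finrank_quotient_add_finrank
    omega
  obtain ⟨⟨v, hv⟩, hspan⟩ := finrank_le_one_iff.mp hfix
  have hax (x : V) : ∃ c : K, a x = c • v - x := by
    have haa : a (a x) = x := by simpa [pow_two] using LinearEquiv.congr_fun ha x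
    obtain ⟨c, hc⟩ := hspan ⟨x + a x, by simp [haa, add_comm]⟩
    exact ⟨c, eq_sub_of_add_eq' (congrArg Subtype.val hc).symm⟩
  refine ⟨v, fun hv0 ↦ ?_, hv, hax⟩
  have hneg : (a : V →ₗ[K] V) = -LinearMap.id := by
    ext x
    obtain ⟨c, hc⟩ := hax x
    simp [hc, hv0]
  rw [hneg, ← neg_one_smul K LinearMap.id, LinearMap.det_smul, hV, LinearMap.det_id] at hdet
  norm_num at hdet

/-- In the basis `e`, the map `a` is a half-turn about `e 0` and `b` permutes the basis vectors
cyclically. Such a pair `(a, b)` is determined up to conjugation by the parameters `s` and `t`. -/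
structure IsHalfTurnRotation (e : Module.Basis (Fin 3) K V) (a b : V ≃ₗ[K] V) (s t : K) :
    Prop where
  left_zero : a (e 0) = e 0
  left_one : a (e 1) = s • e 0 - e 1
  left_two : a (e 2) = t • e 0 - e 2
  right_zero : b (e 0) = e 1
  right_one : b (e 1) = e 2
  right_two : b (e 2) = e 0

lemma exists_isHalfTurnRotation [CharZero K] (hV : Module.finrank K V = 3) {a b : V ≃ₗ[K] V}
    {c : K} (ha : a ^ 2 = 1) (h1 : a ≠ 1) (hdet : LinearMap.det (a : V →ₗ[K] V) = 1)
    (hb : ∀ x, b (b (b x)) = c • x) (hdetb : LinearMap.det (b : V →ₗ[K] V) = 1)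
    (hirr : ∀ W : Submodule K V, (∀ x ∈ W, a x ∈ W) → (∀ x ∈ W, b x ∈ W) → W = ⊥ ∨ W = ⊤) :
    ∃ (e : Module.Basis (Fin 3) K V) (s t : K), IsHalfTurnRotation e a b s t := by
  obtain ⟨v, hv0, hav, hax⟩ := exists_axis_of_involution hV ha h1 hdet
  let u : Fin 3 → V := ![v, b v, b (b v)]
  have hspan : Submodule.span K (Set.range u) = ⊤ := by
    have hmem (i : Fin 3) := Submodule.subset_span (R := K) (Set.mem_range_self (f := u) i)
    refine (hirr (Submodule.span K (Set.range u)) (fun x hx ↦ ?_) (fun x hx ↦ ?_)).resolve_left ?_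
    · obtain ⟨k, hk⟩ := hax x
      rw [hk]
      exact sub_mem (Submodule.smul_mem _ _ (hmem 0)) hx
    · refine Submodule.span_le (p := (Submodule.span K (Set.range u)).comap b.toLinearMap).mpr ?_ hx
      rintro _ ⟨i, rfl⟩
      fin_cases i
      · exact hmem 1
      · exact hmem 2
      · simpa [u, hb] using Submodule.smul_mem _ c (hmem 0)
    · exact fun hbot ↦ hv0 (Submodule.span_eq_bot.mp hbot v (Set.mem_range_self (f := u) 0))
  let e := basisOfTopLeSpanOfCardEqFinrank u hspan.ge (by simp [hV])
  have he : ⇑e = u := coe_basisOfTopLeSpanOfCardEqFinrank ..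
  have hbe : LinearMap.toMatrix e e b = !![0, 0, c; 1, 0, 0; 0, 1, 0] := by
    have h0 : b (e 0) = e 1 := by simp [he, u]
    have h1 : b (e 1) = e 2 := by simp [he, u]
    have h2 : b (e 2) = c • e 0 := by simp [he, u, hb]
    ext i j
    fin_cases j <;> fin_cases i <;> simp [LinearMap.toMatrix_apply, h0, h1, h2]
  have hc : c = 1 := by
    rw [← hdetb, ← LinearMap.det_toMatrix e, hbe]
    simp [det_fin_three]
  obtain ⟨s, hs⟩ := hax (b v)
  obtain ⟨t, ht⟩ := hax (b (b v))
  exact ⟨e, s, t, by simp [he, u, hav], by simp [he, u, hs], by simp [he, u, ht], by simp [he, u],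
    by simp [he, u], by simp [he, u, hb, hc]⟩

namespace IsHalfTurnRotation

variable {e : Module.Basis (Fin 3) K V} {a b : V ≃ₗ[K] V} {s t : K}
  (h : IsHalfTurnRotation e a b s t)

include h

lemma inv_right_zero : b⁻¹ (e 0) = e 2 := (LinearEquiv.symm_apply_eq b).mpr h.right_two.symm
lemma inv_right_one : b⁻¹ (e 1) = e 0 := (LinearEquiv.symm_apply_eq b).mpr h.right_zero.symm
lemma inv_right_two : b⁻¹ (e 2) = e 1 := (LinearEquiv.symm_apply_eq b).mpr h.right_one.symm

lemma trace_right : LinearMap.trace K V (b : V →ₗ[K] V) = 0 := by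
  simp [LinearMap.trace_eq_matrix_trace K e, trace_fin_three, LinearMap.toMatrix_apply,
    h.right_zero, h.right_one, h.right_two]

lemma trace_inv_right : LinearMap.trace K V (b⁻¹ : V ≃ₗ[K] V) = 0 := by
  simp [LinearMap.trace_eq_matrix_trace K e, trace_fin_three, LinearMap.toMatrix_apply,
    h.inv_right_zero, h.inv_right_one, h.inv_right_two, -LinearEquiv.coe_inv]

lemma trace_mul : LinearMap.trace K V (a * b : V ≃ₗ[K] V) = s := by
  simp [LinearMap.trace_eq_matrix_trace K e, trace_fin_three, LinearMap.toMatrix_apply,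
    h.right_zero, h.right_one, h.right_two, h.left_zero, h.left_one, h.left_two]

lemma trace_inv_mul : LinearMap.trace K V (b⁻¹ * a : V ≃ₗ[K] V) = t := by
  simp [LinearMap.trace_eq_matrix_trace K e, trace_fin_three, LinearMap.toMatrix_apply,
    h.inv_right_zero, h.inv_right_one, h.inv_right_two, h.left_zero, h.left_one, h.left_two,
    -LinearEquiv.coe_inv]

-- If `f` is the linear form with `a x = f x • e 0 - x`, the form sought is determined by
-- `B (e 0) x = f x` and `B (b x) (b y) = z * B x y`; it is symmetric because `s = z * t`.
lemma exists_bilinForm [NeZero (2 : K)] {z : K} (hz : z ^ 3 = 1) (hst : s = z * t) :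
    ∃ B : LinearMap.BilinForm K V, B ≠ 0 ∧ B.IsSymm ∧ (∀ x y, B (a x) (a y) = B x y) ∧
      ∀ x y, B (b x) (b y) = z * B x y := by
  let N : Matrix (Fin 3) (Fin 3) K := !![2, s, t; s, 2 * z, z * s; t, z * s, 2 * z ^ 2]
  obtain ⟨B, hsymm, hB⟩ : ∃ B : LinearMap.BilinForm K V, B.IsSymm ∧
      ∀ i j, B (e i) (e j) = N i j := by
    refine ⟨toBilin e N, ?_, fun i j ↦ ?_⟩
    · rw [isSymm_toBilin_iff_isSymm]
      exact IsSymm.ext fun i j ↦ by fin_cases i <;> fin_cases j <;> rfl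
    · exact (LinearMap.BilinForm.toMatrix_apply e _ i j).symm.trans
        (congrFun₂ (LinearMap.BilinForm.toMatrix_toBilin e N) i j)
  refine ⟨B, ?_, hsymm, ?_, ?_⟩
  · rintro rfl
    exact two_ne_zero (hB 0 0).symm
  · refine LinearMap.congr_fun₂ (LinearMap.BilinForm.ext_basis e fun i j ↦ ?_ : B.comp a a = B)
    fin_cases i <;> fin_cases j <;>
      simp [h.left_zero, h.left_one, h.left_two, hB, N] <;> ring
  · refine LinearMap.congr_fun₂
      (LinearMap.BilinForm.ext_basis e fun i j ↦ ?_ : B.comp b b = z • B)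
    fin_cases i <;> fin_cases j <;>
      simp [h.right_zero, h.right_one, h.right_two, hB, N] <;> grind

end IsHalfTurnRotation

end NormalForm

section Backward

open Matrix.SpecialLinearGroup
open scoped Pointwise MatrixGroups

lemma le_sup_ker_of_map_eq_closure {Γ Δ : Type*} [Group Γ] [Group Δ] {φ : Γ →* Δ}
    {G : Subgroup Γ} {s : Set Γ} (h : G.map φ = Subgroup.closure (φ '' s)) :
    G ≤ Subgroup.closure s ⊔ φ.ker := by
  rw [← Subgroup.map_le_map_iff, h, MonoidHom.map_closure]

lemma mem_stabilizer_of_forall_smul_mem {K H V : Type*} [Field K] [Group H] [AddCommGroup V]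
    [Module K V] [FiniteDimensional K V] [DistribMulAction H V] [SMulCommClass H K V]
    {W : Submodule K V} {g : H} (h : ∀ v ∈ W, g • v ∈ W) : g ∈ MulAction.stabilizer H W := by
  refine Submodule.eq_of_le_of_finrank_eq ?_
    (LinearEquiv.finrank_map_eq (DistribMulAction.toLinearEquiv K V g) W)
  rintro _ ⟨v, hv, rfl⟩
  exact h v hv

section PGL

variable {n K : Type*} [Fintype n] [DecidableEq n] [Field K]

lemma toPGL_pow_card_eq_self (hn : Odd (Fintype.card n)) {g : SpecialLinearGroup n K}
    (h : toPGL g ^ 2 = 1) : toPGL (g ^ Fintype.card n) = toPGL g := by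
  obtain ⟨k, hk⟩ := hn
  rw [map_pow, hk, pow_succ, pow_mul, h, one_pow, one_mul]

lemma pow_card_sq_eq_one {g : SpecialLinearGroup n K} (h : toPGL g ^ 2 = 1) :
    (g ^ Fintype.card n) ^ 2 = 1 := by
  rw [← map_pow, toPGL_eq_one_iff] at h
  obtain ⟨z, hz, hgz⟩ := h
  rw [pow_right_comm]
  exact Subtype.ext (by rw [coe_pow, hgz, smul_pow, hz, one_pow, one_smul, coe_one])

lemma exists_trace_eq_mul_of_isConj {g h : SpecialLinearGroup n K}
    (hgh : IsConj (toPGL g) (toPGL h)) :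
    ∃ z : K, z ^ Fintype.card n = 1 ∧
      trace (g : Matrix n n K) = z * trace (h : Matrix n n K) := by
  obtain ⟨c, hc⟩ := isConj_iff.mp hgh.symm
  obtain ⟨k, rfl⟩ := ProjGenLinGroup.mk_surjective c
  obtain ⟨u, hu⟩ := ProjGenLinGroup.mk_eq_mk_iff.mp
    (show ProjGenLinGroup.mk (k * toGL h * k⁻¹) = ProjGenLinGroup.mk (toGL g) from hc)
  refine ⟨u, ?_, ?_⟩
  · simpa [← smul_one_eq_diagonal, k.det_ne_zero] using congrArg (fun x : GL n K ↦ x.1.det) hu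
  · simpa [← smul_one_eq_diagonal, mul_assoc, trace_mul_comm] using
      (congrArg (fun x : GL n K ↦ x.1.trace) hu).symm

lemma exists_trace_eq_mul_trace_inv {g h : SpecialLinearGroup n K}
    (hgh : IsConj (toPGL g) (toPGL g)⁻¹ ∨ IsConj (toPGL g) (toPGL h)) (hh : trace h.1 = 0)
    (hh_inv : trace h⁻¹.1 = 0) :
    ∃ z : K, z ^ Fintype.card n = 1 ∧ trace g.1 = z * trace g⁻¹.1 := by
  rcases hgh with hgh | hgh
  · exact exists_trace_eq_mul_of_isConj (by rwa [map_inv])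
  · have hgh_inv : IsConj (toPGL g⁻¹) (toPGL h⁻¹) := by
      obtain ⟨c, hc⟩ := isConj_iff.mp hgh
      exact isConj_iff.mpr ⟨c, by rw [map_inv, map_inv, ← conj_inv, hc]⟩
    obtain ⟨z, -, hz⟩ := exists_trace_eq_mul_of_isConj hgh
    obtain ⟨w, -, hw⟩ := exists_trace_eq_mul_of_isConj hgh_inv
    exact ⟨1, one_pow _, by rw [hz, hw, hh, hh_inv, mul_zero, mul_zero, mul_zero]⟩

/-- The group of matrices of determinant one that are similitudes of the bilinear form `B`. -/
def similitudes (B : LinearMap.BilinForm K (n → K)) : Subgroup (SpecialLinearGroup n K) where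
  carrier := {g | ∃ c : Kˣ, ∀ x y, B (g • x) (g • y) = c * B x y}
  one_mem' := ⟨1, by simp⟩
  mul_mem' := by
    rintro g h ⟨c, hc⟩ ⟨d, hd⟩
    exact ⟨c * d, fun x y ↦ by simp only [mul_smul, hc, hd, Units.val_mul, mul_assoc]⟩
  inv_mem' := by
    rintro g ⟨c, hc⟩
    refine ⟨c⁻¹, fun x y ↦ ?_⟩
    rw [Units.val_inv_eq_inv_val, eq_inv_mul_iff_mul_eq₀ c.ne_zero, ← hc, smul_inv_smul,
      smul_inv_smul]

lemma ker_toPGL_le_similitudes [Nonempty n] (B : LinearMap.BilinForm K (n → K)) :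
    toPGL.ker ≤ similitudes B := by
  intro g hg
  obtain ⟨z, hz, hgz⟩ := toPGL_eq_one_iff.mp hg
  refine ⟨.ofPowEqOne (z ^ 2) _ (by rw [pow_right_comm, hz, one_pow]) Fintype.card_ne_zero, ?_⟩
  intro x y
  simp [smul_eq_smul_of_coe_eq hgz, pow_two, mul_assoc]

lemma ker_toPGL_le_stabilizer (W : Submodule K (n → K)) :
    toPGL.ker ≤ MulAction.stabilizer (SpecialLinearGroup n K) W := by
  intro g hg
  obtain ⟨z, -, hgz⟩ := toPGL_eq_one_iff.mp hg
  exact mem_stabilizer_of_forall_smul_mem fun v hv ↦ by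
    rw [smul_eq_smul_of_coe_eq hgz]
    exact W.smul_mem z hv

section Generators

variable {G : Subgroup (SpecialLinearGroup n K)} {s : Set (SpecialLinearGroup n K)}

lemma eq_bot_or_eq_top_of_forall_mem_smul_mem
    [(Representation.ofDistribMulAction K G (n → K)).IsIrreducible]
    (hG : G ≤ Subgroup.closure s ⊔ toPGL.ker) {W : Submodule K (n → K)}
    (hW : ∀ g ∈ s, ∀ v ∈ W, g • v ∈ W) : W = ⊥ ∨ W = ⊤ := by
  have hGW : G ≤ MulAction.stabilizer (SpecialLinearGroup n K) W :=
    hG.trans (sup_le ((Subgroup.closure_le _).mpr fun g hg ↦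
      mem_stabilizer_of_forall_smul_mem (hW g hg)) (ker_toPGL_le_stabilizer W))
  refine eq_bot_or_eq_top_of_isIrreducible (H := G) fun g v hv ↦ ?_
  rw [← hGW g.2]
  exact Submodule.smul_mem_pointwise_smul v g.1 W hv

lemma exists_monoidHom_of_subset_similitudes [Nonempty n]
    (hG : G ≤ Subgroup.closure s ⊔ toPGL.ker) {B : LinearMap.BilinForm K (n → K)} (hB0 : B ≠ 0)
    (hB : s ⊆ similitudes B) :
    ∃ χ : G →* Kˣ, ∀ (g : G) (x y : n → K), B (g • x) (g • y) = χ g * B x y := by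
  have hGB : G ≤ similitudes B :=
    hG.trans (sup_le ((Subgroup.closure_le _).mpr hB) (ker_toPGL_le_similitudes B))
  refine exists_monoidHom_of_forall_apply_smul_smul hB0 fun g ↦ ?_
  obtain ⟨c, hc⟩ := hGB g.2
  exact ⟨c, hc⟩

end Generators

end PGL

variable {K : Type*} [Field K]

open DistribMulAction (toModuleAut)

lemma trace_toModuleAut {n : Type*} [Fintype n] [DecidableEq n] (g : SpecialLinearGroup n K) :
    LinearMap.trace K _ (toModuleAut K (n → K) g : (n → K) →ₗ[K] n → K) = trace g.1 :=
  trace_toLin'_eq g.1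

lemma exists_isHalfTurnRotation_toModuleAut [CharZero K] {a b : SpecialLinearGroup (Fin 3) K}
    (ha : a ^ 2 = 1) (h1 : a ≠ 1) (hb : toPGL b ^ 3 = 1)
    (hirr : ∀ W : Submodule K (Fin 3 → K),
      (∀ v ∈ W, a • v ∈ W) → (∀ v ∈ W, b • v ∈ W) → W = ⊥ ∨ W = ⊤) :
    ∃ e, IsHalfTurnRotation e (toModuleAut K (Fin 3 → K) a) (toModuleAut K (Fin 3 → K) b)
      (trace (a * b).1) (trace (b⁻¹ * a).1) := by
  rw [← map_pow, toPGL_eq_one_iff] at hb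
  obtain ⟨c, -, hc⟩ := hb
  have hbc (v : Fin 3 → K) : b • b • b • v = c • v := by
    rw [← smul_eq_smul_of_coe_eq hc, pow_three, mul_smul, mul_smul]
  have hdet (g : SpecialLinearGroup (Fin 3) K) :
      LinearMap.det (toModuleAut K (Fin 3 → K) g : (Fin 3 → K) →ₗ[K] Fin 3 → K) = 1 :=
    (LinearMap.det_toLin' g.1).trans g.2
  obtain ⟨e, s, t, h⟩ := exists_isHalfTurnRotation (by simp)
    (show toModuleAut K (Fin 3 → K) a ^ 2 = 1 by rw [← map_pow, ha, map_one])
    (fun h ↦ h1 (eq_of_smul_eq_smul fun v ↦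
      (LinearEquiv.congr_fun h v).trans (one_smul _ v).symm)) (hdet a) hbc (hdet b) hirr
  rw [← trace_toModuleAut, ← trace_toModuleAut, map_mul, map_mul, map_inv, h.trace_mul,
    h.trace_inv_mul]
  exact ⟨e, h⟩

theorem exists_isSymm_bilinForm_of_isPolyhedralPair [CharZero K]
    {G : Subgroup (SpecialLinearGroup (Fin 3) K)}
    [(Representation.ofDistribMulAction K G (Fin 3 → K)).IsIrreducible] {x y : PGL(3, K)}
    (hxy : IsPolyhedralPair x y) (hG : Subgroup.closure {x, y} = G.map toPGL) :
    ∃ B : LinearMap.BilinForm K (Fin 3 → K), B ≠ 0 ∧ B.IsSymm ∧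
      ∃ χ : G →* Kˣ, ∀ (g : G) (v w : Fin 3 → K), B (g • v) (g • w) = χ g * B v w := by
  obtain ⟨a₀, -, rfl⟩ : x ∈ G.map toPGL := hG ▸ Subgroup.subset_closure (by simp)
  obtain ⟨b, -, rfl⟩ : y ∈ G.map toPGL := hG ▸ Subgroup.subset_closure (by simp)
  obtain ⟨a, hab, ha⟩ : ∃ a : SpecialLinearGroup (Fin 3) K, toPGL a = toPGL a₀ ∧ a ^ 2 = 1 :=
    ⟨_, toPGL_pow_card_eq_self (by decide) hxy.sq_eq_one, pow_card_sq_eq_one hxy.sq_eq_one⟩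
  rw [← hab] at hxy hG
  have hle : G ≤ Subgroup.closure {a, b} ⊔ toPGL.ker :=
    le_sup_ker_of_map_eq_closure (by rw [← hG, Set.image_pair])
  obtain ⟨e, h⟩ := exists_isHalfTurnRotation_toModuleAut ha (fun h ↦ hxy.ne_one (by simp [h]))
    hxy.pow_three_eq_one fun W haW hbW ↦
      eq_bot_or_eq_top_of_forall_mem_smul_mem hle (by simpa using ⟨haW, hbW⟩)
  have hb : trace b.1 = 0 := by rw [← trace_toModuleAut, h.trace_right]
  have hb_inv : trace b⁻¹.1 = 0 := by rw [← trace_toModuleAut, map_inv, h.trace_inv_right]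
  obtain ⟨z, hz, hst⟩ := exists_trace_eq_mul_trace_inv (g := a * b)
    (by rw [map_mul]; exact hxy.isConj) hb hb_inv
  rw [_root_.mul_inv_rev, ← eq_inv_of_mul_eq_one_left ((pow_two a).symm.trans ha)] at hst
  obtain ⟨B, hB0, hsymm, hBa, hBb⟩ := h.exists_bilinForm hz hst
  refine ⟨B, hB0, hsymm, exists_monoidHom_of_subset_similitudes hle hB0 ?_⟩
  rintro _ (rfl | rfl)
  · exact ⟨1, by simpa using hBa⟩
  · exact ⟨.ofPowEqOne z 3 hz three_ne_zero, hBb⟩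

end Backward

open Matrix.SpecialLinearGroup MatrixGroups in
theorem stmt_5_general {K : Type*} [Field K] [IsAlgClosed K] [CharZero K]
    (G : Subgroup (SpecialLinearGroup (Fin 3) K)) [Finite G]
    (hirr : ∀ W : Submodule K (Fin 3 → K),
      (∀ g ∈ G, ∀ v ∈ W, (g : Matrix (Fin 3) (Fin 3) K) *ᵥ v ∈ W) → W = ⊥ ∨ W = ⊤) :
    (∃ (f : MvPolynomial (Fin 3) K) (d : ℕ), 1 ≤ d ∧ d ≤ 2 ∧ f ≠ 0 ∧ f.IsHomogeneous d ∧
      ∃ χ : G →* Kˣ, ∀ (g : G) (v : Fin 3 → K),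
        f.eval (g⁻¹.1.1 *ᵥ v) = χ g * f.eval v) ↔
    (Nonempty (G.map toPGL ≃* alternatingGroup (Fin 4)) ∨
      Nonempty (G.map toPGL ≃* Equiv.Perm (Fin 4)) ∨
      Nonempty (G.map toPGL ≃* alternatingGroup (Fin 5))) := by
  have : (Representation.ofDistribMulAction K G (Fin 3 → K)).IsIrreducible :=
    isIrreducible_ofDistribMulAction fun W hW ↦ hirr W fun g hg ↦ hW ⟨g, hg⟩
  refine (exists_semiInvariant_iff_exists_bilinForm (by decide)).trans ⟨?_, fun hP ↦ ?_⟩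
  · rintro ⟨B, hB0, -, χ, hχ⟩
    exact nonempty_mulEquiv_of_bilinForm hB0 hχ
  · obtain ⟨x, y, hxy, hclosure⟩ :
        ∃ x y : PGL(3, K), IsPolyhedralPair x y ∧ Subgroup.closure {x, y} = G.map toPGL := by
      rcases hP with ⟨⟨e⟩⟩ | ⟨⟨e⟩⟩ | ⟨⟨e⟩⟩
      · exact exists_isPolyhedralPair_of_mulEquiv e exists_isPolyhedralPair_alternatingGroup_four
      · exact exists_isPolyhedralPair_of_mulEquiv e exists_isPolyhedralPair_perm_four
      · exact exists_isPolyhedralPair_of_mulEquiv e exists_isPolyhedralPair_alternatingGroup_five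
    exact exists_isSymm_bilinForm_of_isPolyhedralPair hxy hclosure

/-- A finite irreducible subgroup `G ≤ SL(3, ℂ)` has a nonzero homogeneous
semi-invariant of degree at most 2 if and only if its image `Ḡ` in `PGL(3, ℂ)` is isomorphic
to `A₄`, `S₄` or `A₅`. -/
theorem stmt_5 (G : Subgroup (SpecialLinearGroup (Fin 3) ℂ)) (hGfin : Finite G)
    (hirr : ∀ W : Submodule ℂ (Fin 3 → ℂ),
      (∀ g ∈ G, ∀ v ∈ W, Matrix.mulVec (g : Matrix (Fin 3) (Fin 3) ℂ) v ∈ W) →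
      W = ⊥ ∨ W = ⊤)
    (Gbar : Subgroup (GL (Fin 3) ℂ ⧸ Subgroup.center (GL (Fin 3) ℂ)))
    (hGbar : Gbar = Subgroup.map
      ((QuotientGroup.mk' (Subgroup.center (GL (Fin 3) ℂ))).comp
        SpecialLinearGroup.toGL) G) :
    (∃ (f : MvPolynomial (Fin 3) ℂ) (d : ℕ), 1 ≤ d ∧ d ≤ 2 ∧ f ≠ 0 ∧ f.IsHomogeneous d ∧
      ∃ χ : G →* ℂˣ, ∀ (g : G) (v : Fin 3 → ℂ),
        MvPolynomial.eval
            (Matrix.mulVec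
              (((g : SpecialLinearGroup (Fin 3) ℂ)⁻¹ : SpecialLinearGroup (Fin 3) ℂ) :
                Matrix (Fin 3) (Fin 3) ℂ) v) f
          = (χ g : ℂ) * MvPolynomial.eval v f) ↔
    (Nonempty (Gbar ≃* alternatingGroup (Fin 4)) ∨
      Nonempty (Gbar ≃* Equiv.Perm (Fin 4)) ∨
      Nonempty (Gbar ≃* alternatingGroup (Fin 5))) := by
  subst hGbar
  exact stmt_5_general G hirr
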